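/- arXiv:2107.11528 — 2 statements merged into one kernel-verified Lean document; each statement's English description precedes it below -/
import Mathlib

section
/- (Weighted L¹ bound for the nonlinearity) Let 0 < c < 3/2. There is a constant C = C(c) > 0 such that for every Schwartz function f : ℝ³ → ℂ, ∫_{ℝ³} |f(x)|³ / |x|^c dx ≤ C ‖f‖_{H¹(ℝ³)}³. -/
open MeasureTheory Real Filter
open scoped BigOperators Topology

noncomputable section

/-- Three-dimensional Euclidean space. -/
abbrev E3 : Type := EuclideanSpace ℝ (Fin 3)

/-- The `j`-th standard basis vector of `E3`. -/
def e3 (j : Fin 3) : E3 := EuclideanSpace.single j 1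

/-- The `j`-th spatial partial derivative of a complex-valued function. -/
def pd (j : Fin 3) (f : E3 → ℂ) (x : E3) : ℂ := fderiv ℝ f x (e3 j)

/-- The `j`-th spatial partial derivative of a real-valued function. -/
def pdR (j : Fin 3) (w : E3 → ℝ) (x : E3) : ℝ := fderiv ℝ w x (e3 j)

/-- The Laplacian of a complex-valued function on `E3`. -/
def lap (f : E3 → ℂ) (x : E3) : ℂ := ∑ j : Fin 3, pd j (fun y => pd j f y) x

/-- The Laplacian of a real-valued function on `E3`. -/
def lapR (w : E3 → ℝ) (x : E3) : ℝ := ∑ j : Fin 3, pdR j (fun y => pdR j w y) x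

/-- Second partial derivatives `∂_j ∂_k w` of a real-valued function on `E3`. -/
def pdR2 (j k : Fin 3) (w : E3 → ℝ) (x : E3) : ℝ := pdR j (fun y => pdR k w y) x

/-- A smooth Schwartz solution of the inhomogeneous cubic NLS with inverse-square
potential: `i ∂ₜ u + Δu − (a/|x|²) u = λ |x|^{−b} |u|² u` on `ℝ × (ℝ³ \ {0})`,
with `u(t,·)` Schwartz for each time, and Schwartz seminorms of `u(t,·)`
and `∂ₜ u(t,·)` locally uniformly bounded in `t`. -/
structure IsSchwartzSolution (a b lam : ℝ) (u : ℝ → E3 → ℂ) : Prop where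
  smooth : ContDiff ℝ (⊤ : ℕ∞) (Function.uncurry u)
  schwartz : ∀ t : ℝ, ∃ f : SchwartzMap E3 ℂ, ∀ x : E3, f x = u t x
  schwartz_dt : ∀ t : ℝ, ∃ f : SchwartzMap E3 ℂ, ∀ x : E3,
      f x = deriv (fun s => u s x) t
  unif_bound : ∀ (k n : ℕ) (T : ℝ), 0 < T → ∃ C : ℝ, ∀ t ∈ Set.Icc (-T) T, ∀ x : E3,
      ‖x‖ ^ k * ‖iteratedFDeriv ℝ n (u t) x‖
        + ‖x‖ ^ k * ‖iteratedFDeriv ℝ n (fun y => deriv (fun s => u s y) t) x‖ ≤ C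
  eqn : ∀ (t : ℝ) (x : E3), x ≠ 0 →
      Complex.I * deriv (fun s => u s x) t + lap (u t) x
          - ((a / ‖x‖ ^ 2 : ℝ) : ℂ) * u t x
        = (lam : ℂ) * ((‖x‖ ^ (-b) : ℝ) : ℂ) * ((‖u t x‖ ^ 2 : ℝ) : ℂ) * u t x

/-!
The weight `‖x‖ ^ (-c)` is at most `1` off the unit ball, and on the unit ball it lies in the
Lebesgue space dual to `L ^ (p' / q)`, where `p'` is the Sobolev conjugate of `p`. On the ball,
Hölder's inequality therefore leaves the `L ^ p'` norm of `f`; off the ball, the `L ^ q` norm is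
interpolated between `L ^ p` and `L ^ p'`. The Gagliardo–Nirenberg–Sobolev inequality bounds the
`L ^ p'` norm, and smooth cutoffs at scale `R` remove its compact support hypothesis, since their
gradients contribute only `O(1 / R)`.
-/

open Metric
open scoped ENNReal NNReal

theorem opNorm_sq_le_sum_norm_apply_sq {ι 𝕜 E F : Type*} [Fintype ι] [RCLike 𝕜]
    [NormedAddCommGroup E] [InnerProductSpace 𝕜 E] [SeminormedAddCommGroup F] [NormedSpace 𝕜 F]
    (b : OrthonormalBasis ι 𝕜 E) (L : E →L[𝕜] F) :
    ‖L‖ ^ 2 ≤ ∑ i, ‖L (b i)‖ ^ 2 := by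
  rw [← Real.le_sqrt (norm_nonneg L) (Finset.sum_nonneg fun i _ ↦ sq_nonneg ‖L (b i)‖)]
  refine L.opNorm_le_bound (Real.sqrt_nonneg _) fun v ↦ ?_
  calc ‖L v‖ = ‖∑ i, inner 𝕜 (b i) v • L (b i)‖ := by
        simp_rw [← map_smul, ← map_sum, b.sum_repr']
    _ ≤ ∑ i, ‖inner 𝕜 (b i) v‖ * ‖L (b i)‖ := norm_sum_le_of_le _ fun i _ ↦ norm_smul_le _ _
    _ ≤ √(∑ i, ‖inner 𝕜 (b i) v‖ ^ 2) * √(∑ i, ‖L (b i)‖ ^ 2) :=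
        sum_mul_le_sqrt_mul_sqrt _ _ _
    _ = √(∑ i, ‖L (b i)‖ ^ 2) * ‖v‖ := by
        rw [b.sum_sq_norm_inner_right, Real.sqrt_sq (norm_nonneg v), mul_comm]

section Lebesgue

variable {α F : Type*} [MeasurableSpace α] {μ : Measure α} [NormedAddCommGroup F]
  {f : α → F} {p q r : ℝ≥0}

theorem eLpNorm_le_max_of_le_of_le (hf : AEStronglyMeasurable f μ) (hp : 0 < p) (hpq : p ≤ q)
    (hqr : q ≤ r) : eLpNorm f q μ ≤ max (eLpNorm f p μ) (eLpNorm f r μ) := by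
  set N := max (eLpNorm f p μ) (eLpNorm f r μ)
  obtain ⟨s, t, hs, ht, hst, hq⟩ : (q : ℝ) ∈ segment ℝ (p : ℝ) r := by
    rw [segment_eq_Icc (by exact_mod_cast hpq.trans hqr)]
    exact ⟨by exact_mod_cast hpq, by exact_mod_cast hqr⟩
  have hq₀ : 0 < q := hp.trans_le hpq
  have hr₀ : 0 < r := hq₀.trans_le hqr
  rw [smul_eq_mul, smul_eq_mul, mul_comm s, mul_comm t] at hq
  have hsplit (x : ℝ≥0∞) : x ^ (q : ℝ) = (x ^ (p : ℝ)) ^ s * (x ^ (r : ℝ)) ^ t := by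
    rw [← ENNReal.rpow_mul, ← ENNReal.rpow_mul,
      ← ENNReal.rpow_add_of_nonneg _ _ (by positivity) (by positivity), hq]
  rw [← ENNReal.rpow_le_rpow_iff (by exact_mod_cast hq₀ : (0 : ℝ) < q)]
  calc eLpNorm f q μ ^ (q : ℝ) = ∫⁻ x, (‖f x‖ₑ ^ (p : ℝ)) ^ s * (‖f x‖ₑ ^ (r : ℝ)) ^ t ∂μ := by
        simp_rw [eLpNorm_nnreal_pow_eq_lintegral hq₀.ne', hsplit]
    _ ≤ (∫⁻ x, ‖f x‖ₑ ^ (p : ℝ) ∂μ) ^ s * (∫⁻ x, ‖f x‖ₑ ^ (r : ℝ) ∂μ) ^ t :=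
        ENNReal.lintegral_mul_norm_pow_le (hf.enorm.pow_const _) (hf.enorm.pow_const _) hs ht hst
    _ = (eLpNorm f p μ ^ (p : ℝ)) ^ s * (eLpNorm f r μ ^ (r : ℝ)) ^ t := by
        rw [eLpNorm_nnreal_pow_eq_lintegral hp.ne', eLpNorm_nnreal_pow_eq_lintegral hr₀.ne']
    _ ≤ (N ^ (p : ℝ)) ^ s * (N ^ (r : ℝ)) ^ t := by
        gcongr
        exacts [le_max_left _ _, le_max_right _ _]
    _ = N ^ (q : ℝ) := (hsplit N).symm

theorem lintegral_enorm_rpow_mul_le_eLpNorm_rpow_mul (hf : AEStronglyMeasurable f μ) (hqr : q < r)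
    {w : α → ℝ≥0∞} (hw : AEMeasurable w μ) :
    ∫⁻ x, ‖f x‖ₑ ^ (q : ℝ) * w x ∂μ ≤
      eLpNorm f r μ ^ (q : ℝ) * (∫⁻ x, w x ^ (1 - q / r : ℝ)⁻¹ ∂μ) ^ (1 - q / r : ℝ) := by
  have hr : 0 < r := pos_of_gt hqr
  have hlt : (0 : ℝ) < 1 - q / r := sub_pos.2 ((div_lt_one (by exact_mod_cast hr)).2 hqr)
  have hq (x : ℝ≥0∞) : (x ^ (r : ℝ)) ^ (q / r : ℝ) = x ^ (q : ℝ) := by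
    rw [← ENNReal.rpow_mul, mul_div_cancel₀ _ (by exact_mod_cast hr.ne')]
  calc ∫⁻ x, ‖f x‖ₑ ^ (q : ℝ) * w x ∂μ
      = ∫⁻ x, (‖f x‖ₑ ^ (r : ℝ)) ^ (q / r : ℝ) *
          (w x ^ (1 - q / r : ℝ)⁻¹) ^ (1 - q / r : ℝ) ∂μ := by
        simp_rw [hq, ENNReal.rpow_inv_rpow hlt.ne']
    _ ≤ (∫⁻ x, ‖f x‖ₑ ^ (r : ℝ) ∂μ) ^ (q / r : ℝ) *
          (∫⁻ x, w x ^ (1 - q / r : ℝ)⁻¹ ∂μ) ^ (1 - q / r : ℝ) :=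
        ENNReal.lintegral_mul_norm_pow_le (hf.enorm.pow_const _) (hw.pow_const _) (by positivity)
          hlt.le (add_sub_cancel _ _)
    _ = _ := by rw [← eLpNorm_nnreal_pow_eq_lintegral hr.ne', hq]

theorem lintegral_enorm_rpow_mul_le_of_le_one_on_compl (hf : AEStronglyMeasurable f μ)
    (hp : 0 < p) (hpq : p ≤ q) (hqr : q < r) {w : α → ℝ≥0∞} (hw : AEMeasurable w μ)
    {s : Set α} (hs : MeasurableSet s) (hws : ∀ x ∈ sᶜ, w x ≤ 1) :
    ∫⁻ x, ‖f x‖ₑ ^ (q : ℝ) * w x ∂μ ≤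
      ((∫⁻ x in s, w x ^ (1 - q / r : ℝ)⁻¹ ∂μ) ^ (1 - q / r : ℝ) + 1) *
        max (eLpNorm f p μ) (eLpNorm f r μ) ^ (q : ℝ) := by
  set N := max (eLpNorm f p μ) (eLpNorm f r μ)
  set W := (∫⁻ x in s, w x ^ (1 - q / r : ℝ)⁻¹ ∂μ) ^ (1 - q / r : ℝ)
  have h_on : ∫⁻ x in s, ‖f x‖ₑ ^ (q : ℝ) * w x ∂μ ≤ N ^ (q : ℝ) * W := by
    refine (lintegral_enorm_rpow_mul_le_eLpNorm_rpow_mul hf.restrict hqr hw.restrict).trans ?_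
    gcongr
    exact (eLpNorm_restrict_le f r μ s).trans (le_max_right _ _)
  have h_off : ∫⁻ x in sᶜ, ‖f x‖ₑ ^ (q : ℝ) * w x ∂μ ≤ N ^ (q : ℝ) := by
    calc ∫⁻ x in sᶜ, ‖f x‖ₑ ^ (q : ℝ) * w x ∂μ ≤ ∫⁻ x in sᶜ, ‖f x‖ₑ ^ (q : ℝ) ∂μ :=
          setLIntegral_mono' hs.compl fun x hx ↦ mul_le_of_le_one_right' (hws x hx)
      _ ≤ ∫⁻ x, ‖f x‖ₑ ^ (q : ℝ) ∂μ := setLIntegral_le_lintegral _ _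
      _ = eLpNorm f q μ ^ (q : ℝ) := (eLpNorm_nnreal_pow_eq_lintegral (hp.trans_le hpq).ne').symm
      _ ≤ N ^ (q : ℝ) := by
          gcongr
          exact eLpNorm_le_max_of_le_of_le hf hp hpq hqr.le
  calc ∫⁻ x, ‖f x‖ₑ ^ (q : ℝ) * w x ∂μ ≤ N ^ (q : ℝ) * W + N ^ (q : ℝ) := by
        rw [← lintegral_add_compl _ hs]
        exact add_le_add h_on h_off
    _ = (W + 1) * N ^ (q : ℝ) := by ring

theorem eLpNorm_le_ofReal_integral_rpow (hp : 0 < p) {g : α → ℝ} (hg : Integrable g μ)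
    (hfg : ∀ x, ‖f x‖ ^ (p : ℝ) ≤ g x) :
    eLpNorm f p μ ≤ ENNReal.ofReal ((∫ x, g x ∂μ) ^ (1 / p : ℝ)) := by
  have hg₀ (x : α) : 0 ≤ g x := (by positivity : 0 ≤ ‖f x‖ ^ (p : ℝ)).trans (hfg x)
  rw [eLpNorm_nnreal_eq_lintegral hp.ne',
    ← ENNReal.ofReal_rpow_of_nonneg (integral_nonneg hg₀) (by positivity),
    ofReal_integral_eq_lintegral_ofReal hg (ae_of_all _ hg₀)]
  gcongr with x
  rw [← ofReal_norm, ENNReal.ofReal_rpow_of_nonneg (norm_nonneg _) p.coe_nonneg]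
  exact ENNReal.ofReal_le_ofReal (hfg x)

theorem integrable_and_integral_le_of_lintegral_ofReal_le {g : α → ℝ}
    (hg : AEStronglyMeasurable g μ) (hg₀ : 0 ≤ᵐ[μ] g) {a : ℝ} (ha : 0 ≤ a)
    (h : ∫⁻ x, ENNReal.ofReal (g x) ∂μ ≤ .ofReal a) :
    Integrable g μ ∧ ∫ x, g x ∂μ ≤ a := by
  refine ⟨⟨hg, ?_⟩, ?_⟩
  · exact (hasFiniteIntegral_iff_ofReal hg₀).2 (h.trans_lt ENNReal.ofReal_lt_top)
  · rw [integral_eq_lintegral_of_nonneg_ae hg₀ hg]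
    exact ENNReal.toReal_le_of_le_ofReal ha h

theorem max_eLpNorm_two_le_integral_sum_sq {ι E G : Type*} [Fintype ι] [NormedAddCommGroup E]
    [InnerProductSpace ℝ E] [NormedAddCommGroup G] [NormedSpace ℝ G] (b : OrthonormalBasis ι ℝ E)
    {L : α → E →L[ℝ] G} (hf : MemLp f 2 μ) (hL : MemLp L 2 μ) :
    max (eLpNorm f 2 μ) (eLpNorm L 2 μ) ≤
      ENNReal.ofReal ((∫ x, (‖f x‖ ^ 2 + ∑ i, ‖L x (b i)‖ ^ 2) ∂μ) ^ (1 / 2 : ℝ)) := by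
  have hLb (i : ι) : MemLp (fun x ↦ L x (b i)) 2 μ :=
    (ContinuousLinearMap.apply ℝ G (b i)).comp_memLp' hL
  have hint : Integrable (fun x ↦ ‖f x‖ ^ 2 + ∑ i, ‖L x (b i)‖ ^ 2) μ :=
    (hf.integrable_norm_pow two_ne_zero).add
      (integrable_finsetSum _ fun i _ ↦ (hLb i).integrable_norm_pow two_ne_zero)
  refine max_le (eLpNorm_le_ofReal_integral_rpow (p := 2) two_pos hint fun x ↦ ?_)
    (eLpNorm_le_ofReal_integral_rpow (p := 2) two_pos hint fun x ↦ ?_)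
  · rw [NNReal.coe_ofNat, rpow_ofNat]
    exact le_add_of_nonneg_right (by positivity)
  · rw [NNReal.coe_ofNat, rpow_ofNat]
    exact (opNorm_sq_le_sum_norm_apply_sq b (L x)).trans (le_add_of_nonneg_left (by positivity))

end Lebesgue

section Sobolev

variable {E F : Type*} [NormedAddCommGroup E] [NormedSpace ℝ E] [NormedAddCommGroup F]
  [NormedSpace ℝ F]

variable (E) in
theorem exists_contDiff_cutoff [HasContDiffBump E] [FiniteDimensional ℝ E] :
    ∃ M : ℝ, ∀ R > 0, ∃ χ : E → ℝ, ContDiff ℝ 1 χ ∧ HasCompactSupport χ ∧ (∀ x, ‖χ x‖ ≤ 1) ∧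
      (∀ x, ‖fderiv ℝ χ x‖ ≤ M / R) ∧ ∀ x ∈ closedBall 0 R, χ x = 1 := by
  let b : ContDiffBump (0 : E) := ⟨1, 2, one_pos, one_lt_two⟩
  have hb : ContDiff ℝ 1 b := b.contDiff
  obtain ⟨M, hM⟩ := (hb.continuous_fderiv one_ne_zero).bounded_above_of_compact_support
    (b.hasCompactSupport.fderiv ℝ)
  refine ⟨M, fun R hR ↦ ⟨fun x ↦ b (R⁻¹ • x), hb.comp (contDiff_const_smul _),
    b.hasCompactSupport.comp_smul (inv_ne_zero hR.ne'), fun x ↦ ?_, fun x ↦ ?_, fun x hx ↦ ?_⟩⟩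
  · rw [Real.norm_of_nonneg b.nonneg]
    exact b.le_one
  · rw [fderiv_comp_smul, norm_smul, norm_inv, Real.norm_of_nonneg hR.le, inv_mul_eq_div]
    gcongr
    exact hM _
  · apply b.one_of_mem_closedBall
    rw [mem_closedBall_zero_iff] at hx ⊢
    rw [norm_smul, norm_inv, Real.norm_of_nonneg hR.le]
    exact inv_mul_le_one_of_le₀ hx hR.le

variable [MeasurableSpace E] [BorelSpace E] {μ : Measure E}

theorem eLpNorm_fderiv_smul_le [SecondCountableTopology E] {χ : E → ℝ} {u : E → F}
    (hχ : ContDiff ℝ 1 χ) (hu : ContDiff ℝ 1 u) {δ : ℝ} (hχ_le : ∀ x, ‖χ x‖ ≤ 1)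
    (hχ' : ∀ x, ‖fderiv ℝ χ x‖ ≤ δ) {p : ℝ≥0∞} (hp : 1 ≤ p) :
    eLpNorm (fderiv ℝ fun x ↦ χ x • u x) p μ ≤
      eLpNorm (fderiv ℝ u) p μ + ENNReal.ofReal δ * eLpNorm u p μ := by
  have hfderiv (x : E) : ‖fderiv ℝ (fun y ↦ χ y • u y) x‖ ≤ ‖fderiv ℝ u x‖ + δ * ‖u x‖ := by
    rw [fderiv_fun_smul (hχ.differentiable one_ne_zero x) (hu.differentiable one_ne_zero x)]
    refine norm_add_le_of_le ?_ ?_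
    · rw [norm_smul]
      exact mul_le_of_le_one_left (norm_nonneg _) (hχ_le x)
    · rw [ContinuousLinearMap.norm_smulRight_apply]
      gcongr
      exact hχ' x
  have hδ : 0 ≤ δ := (norm_nonneg _).trans (hχ' 0)
  calc eLpNorm (fderiv ℝ fun x ↦ χ x • u x) p μ
      ≤ eLpNorm (fun x ↦ ‖fderiv ℝ u x‖ + δ * ‖u x‖) p μ := eLpNorm_mono_real hfderiv
    _ ≤ eLpNorm (fun x ↦ ‖fderiv ℝ u x‖) p μ + eLpNorm (fun x ↦ δ * ‖u x‖) p μ :=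
        eLpNorm_add_le (hu.continuous_fderiv one_ne_zero).norm.aestronglyMeasurable
          (hu.continuous.norm.const_mul δ).aestronglyMeasurable hp
    _ = eLpNorm (fderiv ℝ u) p μ + ENNReal.ofReal δ * eLpNorm u p μ := by
        rw [eLpNorm_norm, ← eLpNorm_norm u, ← Real.enorm_of_nonneg hδ]
        exact congrArg _ (eLpNorm_const_smul δ (fun x ↦ ‖u x‖) p μ)

variable [FiniteDimensional ℝ E] [FiniteDimensional ℝ F] [μ.IsAddHaarMeasure]

theorem eLpNorm_le_eLpNorm_fderiv_of_memLp {p p' : ℝ≥0} (hp : 1 ≤ p)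
    (hd : 0 < Module.finrank ℝ E) (hp' : (p' : ℝ)⁻¹ = (p : ℝ)⁻¹ - (Module.finrank ℝ E : ℝ)⁻¹)
    {u : E → F} (hu : ContDiff ℝ 1 u) (hup : MemLp u p μ) :
    eLpNorm u p' μ ≤ SNormLESNormFDerivOfEqConst F μ p * eLpNorm (fderiv ℝ u) p μ := by
  obtain ⟨M, hM⟩ := exists_contDiff_cutoff E
  choose χ hχ hχ_supp hχ_le hχ' hχ_one using fun n : ℕ ↦ hM (n + 1) n.cast_add_one_pos
  set K : ℝ≥0 := SNormLESNormFDerivOfEqConst F μ p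
  have hbound (n : ℕ) : eLpNorm (fun x ↦ χ n x • u x) p' μ ≤
      K * (eLpNorm (fderiv ℝ u) p μ + ENNReal.ofReal (M / (n + 1)) * eLpNorm u p μ) := by
    refine (eLpNorm_le_eLpNorm_fderiv_of_eq μ ((hχ n).smul hu) (hχ_supp n).smul_right hp hd
      hp').trans ?_
    gcongr
    exact eLpNorm_fderiv_smul_le (hχ n) hu (hχ_le n) (hχ' n) (by exact_mod_cast hp)
  have hlim_bound : Tendsto (fun n : ℕ ↦
      K * (eLpNorm (fderiv ℝ u) p μ + ENNReal.ofReal (M / (n + 1)) * eLpNorm u p μ)) atTop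
      (𝓝 (K * eLpNorm (fderiv ℝ u) p μ)) := by
    have hzero : Tendsto (fun n : ℕ ↦ M / ((n : ℝ) + 1)) atTop (𝓝 0) :=
      tendsto_const_nhds.div_atTop
        (tendsto_atTop_add_const_right _ _ tendsto_natCast_atTop_atTop)
    have herror : Tendsto (fun n : ℕ ↦ ENNReal.ofReal (M / (n + 1)) * eLpNorm u p μ) atTop
        (𝓝 0) := by
      simpa only [ENNReal.ofReal_zero, zero_mul] using
        ENNReal.Tendsto.mul_const (ENNReal.tendsto_ofReal hzero) (.inr hup.eLpNorm_ne_top)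
    simpa only [add_zero] using
      ENNReal.Tendsto.const_mul (tendsto_const_nhds.add herror) (.inr ENNReal.coe_ne_top)
  have hlim (x : E) : Tendsto (fun n ↦ χ n x • u x) atTop (𝓝 (u x)) := by
    refine tendsto_const_nhds.congr' ?_
    filter_upwards [tendsto_natCast_atTop_atTop.eventually_ge_atTop ‖x‖] with n hn
    rw [hχ_one n x (mem_closedBall_zero_iff.2 (hn.trans (le_add_of_nonneg_right zero_le_one))),
      one_smul]
  calc eLpNorm u p' μ ≤ liminf (fun n ↦ eLpNorm (fun x ↦ χ n x • u x) p' μ) atTop :=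
        Lp.eLpNorm_lim_le_liminf_eLpNorm
          (fun n ↦ ((hχ n).continuous.smul hu.continuous).aestronglyMeasurable) u
          (ae_of_all _ hlim)
    _ ≤ _ := liminf_le_liminf (.of_forall hbound)
    _ = K * eLpNorm (fderiv ℝ u) p μ := hlim_bound.liminf_eq

end Sobolev

/-- The Sobolev conjugate `dp / (d - p)` of the exponent `p` in dimension `d`, that is, the target
exponent of the Sobolev embedding of `W^{1,p}`. It takes the junk value `0` when `d ≤ p`. -/
def sobolevConjugate (d p : ℝ≥0) : ℝ≥0 := (p⁻¹ - d⁻¹)⁻¹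

theorem coe_inv_sobolevConjugate {d p : ℝ≥0} (hp : 0 < p) (hpd : p ≤ d) :
    (sobolevConjugate d p : ℝ)⁻¹ = (p : ℝ)⁻¹ - (d : ℝ)⁻¹ := by
  rw [sobolevConjugate, NNReal.coe_inv, inv_inv, NNReal.coe_sub (inv_anti₀ hp hpd),
    NNReal.coe_inv, NNReal.coe_inv]

theorem sobolevConjugate_pos {d p : ℝ≥0} (hp : 0 < p) (hpd : p < d) : 0 < sobolevConjugate d p :=
  inv_pos.2 (tsub_pos_of_lt (inv_strictAnti₀ hp hpd))

section Weighted

variable {E F : Type*} [NormedAddCommGroup E] [NormedSpace ℝ E] [FiniteDimensional ℝ E]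
  [MeasurableSpace E] [BorelSpace E] (μ : Measure E) [μ.IsAddHaarMeasure]

theorem integrableOn_ball_norm_rpow_iff [Nontrivial E] {R : ℝ} (hR : 0 < R) {s : ℝ} :
    IntegrableOn (fun x : E ↦ ‖x‖ ^ s) (ball 0 R) μ ↔ -(Module.finrank ℝ E : ℝ) < s := by
  have hd : 1 ≤ Module.finrank ℝ E := Module.finrank_pos
  have hradial : Set.EqOn (fun y : ℝ ↦ y ^ (Module.finrank ℝ E - 1) • y ^ s)
      (fun y ↦ y ^ (Module.finrank ℝ E - 1 + s)) (Set.Ioo 0 R) := fun y hy ↦ by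
    simp only [smul_eq_mul, ← Nat.cast_pred hd, rpow_add hy.1, rpow_natCast]
  rw [integrableOn_fun_norm_addHaar μ (f := fun y : ℝ ↦ y ^ s),
    integrableOn_congr_fun hradial measurableSet_Ioo,
    intervalIntegral.integrableOn_Ioo_rpow_iff hR]
  constructor <;> intro h <;> linarith

theorem setLIntegral_ball_ofReal_norm_rpow_rpow_ne_top [Nontrivial E] {R : ℝ} (hR : 0 < R)
    {s t : ℝ} (ht : 0 ≤ t) (hst : -(Module.finrank ℝ E : ℝ) < s * t) :
    ∫⁻ x in ball (0 : E) R, ENNReal.ofReal (‖x‖ ^ s) ^ t ∂μ ≠ ∞ := by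
  have hpow (x : E) : ENNReal.ofReal (‖x‖ ^ s) ^ t = ENNReal.ofReal (‖x‖ ^ (s * t)) := by
    rw [ENNReal.ofReal_rpow_of_nonneg (by positivity) ht, rpow_mul (norm_nonneg x)]
  simp_rw [hpow]
  exact ((integrableOn_ball_norm_rpow_iff μ hR).2 hst).lintegral_lt_top.ne

variable [NormedAddCommGroup F] [NormedSpace ℝ F] [FiniteDimensional ℝ F]

variable (F) in
theorem exists_lintegral_enorm_rpow_mul_norm_rpow_neg_le {p q : ℝ≥0} (hp : 1 ≤ p)
    (hpd : p < Module.finrank ℝ E) (hpq : p ≤ q) {c : ℝ} (hc₀ : 0 ≤ c)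
    (hc : c < Module.finrank ℝ E * (1 - q * ((p : ℝ)⁻¹ - (Module.finrank ℝ E : ℝ)⁻¹))) :
    ∃ C : ℝ≥0, ∀ f : E → F, ContDiff ℝ 1 f → MemLp f p μ →
      ∫⁻ x, ‖f x‖ₑ ^ (q : ℝ) * ENNReal.ofReal (‖x‖ ^ (-c)) ∂μ ≤
        C * max (eLpNorm f p μ) (eLpNorm (fderiv ℝ f) p μ) ^ (q : ℝ) := by
  have hd : 0 < Module.finrank ℝ E := Nat.cast_pos.1 (pos_of_gt hpd)
  set p' := sobolevConjugate (Module.finrank ℝ E) p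
  have hp' : (p' : ℝ)⁻¹ = (p : ℝ)⁻¹ - (Module.finrank ℝ E : ℝ)⁻¹ :=
    coe_inv_sobolevConjugate (one_pos.trans_le hp) hpd.le
  rw [← hp', ← div_eq_mul_inv] at hc
  have hlt : (0 : ℝ) < 1 - q / p' := pos_of_mul_pos_right (hc₀.trans_lt hc) (Nat.cast_nonneg _)
  have hqp' : q < p' := by
    have hp'₀ : 0 < p' := sobolevConjugate_pos (one_pos.trans_le hp) hpd
    exact_mod_cast (div_lt_one (by exact_mod_cast hp'₀)).1 (sub_pos.1 hlt)
  have : Nontrivial E := Module.finrank_pos_iff.1 hd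
  set w : E → ℝ≥0∞ := fun x ↦ ENNReal.ofReal (‖x‖ ^ (-c))
  have hw_off (x : E) (hx : x ∈ (ball 0 1)ᶜ) : w x ≤ 1 := by
    rw [Set.mem_compl_iff, mem_ball_zero_iff, not_lt] at hx
    exact ENNReal.ofReal_le_one.2 (rpow_le_one_of_one_le_of_nonpos hx (neg_nonpos.2 hc₀))
  set W := (∫⁻ x in ball 0 1, w x ^ (1 - q / p' : ℝ)⁻¹ ∂μ) ^ (1 - q / p' : ℝ)
  have hW : W ≠ ∞ := by
    refine ENNReal.rpow_ne_top_of_nonneg hlt.le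
      (setLIntegral_ball_ofReal_norm_rpow_rpow_ne_top μ one_pos (inv_nonneg.2 hlt.le) ?_)
    rwa [neg_mul, neg_lt_neg_iff, ← div_eq_mul_inv, div_lt_iff₀ hlt]
  set K : ℝ≥0 := max 1 (SNormLESNormFDerivOfEqConst F μ p)
  refine ⟨(W.toNNReal + 1) * K ^ (q : ℝ), fun f hf hfp ↦ ?_⟩
  set N := max (eLpNorm f p μ) (eLpNorm (fderiv ℝ f) p μ)
  have hN : max (eLpNorm f p μ) (eLpNorm f p' μ) ≤ K * N := by
    refine max_le ((le_max_left _ _).trans (le_mul_of_one_le_left' ?_))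
      ((eLpNorm_le_eLpNorm_fderiv_of_memLp hp hd hp' hf hfp).trans (mul_le_mul' ?_ ?_))
    · exact_mod_cast le_max_left _ _
    · exact_mod_cast le_max_right _ _
    · exact le_max_right _ _
  calc ∫⁻ x, ‖f x‖ₑ ^ (q : ℝ) * w x ∂μ
      ≤ (W + 1) * max (eLpNorm f p μ) (eLpNorm f p' μ) ^ (q : ℝ) :=
        lintegral_enorm_rpow_mul_le_of_le_one_on_compl hf.continuous.aestronglyMeasurable
          (one_pos.trans_le hp) hpq hqp' (by fun_prop) measurableSet_ball hw_off
    _ ≤ (W + 1) * (K * N) ^ (q : ℝ) := by gcongr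
    _ = _ := by
        rw [ENNReal.mul_rpow_of_nonneg _ _ q.coe_nonneg, ← mul_assoc]
        push_cast [ENNReal.coe_toNNReal hW, ENNReal.coe_rpow_of_nonneg _ q.coe_nonneg]
        rfl

end Weighted

theorem weighted_L1_nonlinearity_bound_general {ι E F : Type*} [Fintype ι]
    [NormedAddCommGroup E] [InnerProductSpace ℝ E] [FiniteDimensional ℝ E]
    [MeasurableSpace E] [BorelSpace E] [NormedAddCommGroup F] [NormedSpace ℝ F]
    [FiniteDimensional ℝ F] (μ : Measure E) [μ.IsAddHaarMeasure] (b : OrthonormalBasis ι ℝ E)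
    (hd : 2 < Module.finrank ℝ E) {q c : ℝ} (hq : 2 ≤ q) (hc₀ : 0 ≤ c)
    (hc : c < Module.finrank ℝ E * (1 - q * (2⁻¹ - (Module.finrank ℝ E : ℝ)⁻¹))) :
    ∃ C : ℝ, 0 < C ∧ ∀ f : E → F, ContDiff ℝ 1 f → MemLp f 2 μ → MemLp (fderiv ℝ f) 2 μ →
      Integrable (fun x ↦ ‖f x‖ ^ q * ‖x‖ ^ (-c)) μ ∧
      ∫ x, ‖f x‖ ^ q * ‖x‖ ^ (-c) ∂μ ≤
        C * (∫ x, (‖f x‖ ^ 2 + ∑ i, ‖fderiv ℝ f x (b i)‖ ^ 2) ∂μ) ^ (q / 2) := by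
  lift q to ℝ≥0 using zero_le_two.trans hq
  obtain ⟨C, hC⟩ := exists_lintegral_enorm_rpow_mul_norm_rpow_neg_le F μ (p := 2) one_le_two
    (by exact_mod_cast hd) (by exact_mod_cast hq) hc₀ hc
  refine ⟨C + 1, by positivity, fun f hf hf₂ hf₂' ↦ ?_⟩
  set H := ∫ x, (‖f x‖ ^ 2 + ∑ i, ‖fderiv ℝ f x (b i)‖ ^ 2) ∂μ
  have hH : 0 ≤ H := integral_nonneg fun x ↦ by positivity
  have hnonneg (x : E) : 0 ≤ ‖f x‖ ^ (q : ℝ) * ‖x‖ ^ (-c) := by positivity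
  have hmeas : AEStronglyMeasurable (fun x ↦ ‖f x‖ ^ (q : ℝ) * ‖x‖ ^ (-c)) μ :=
    (hf.continuous.norm.rpow_const fun _ ↦ .inr q.coe_nonneg).aestronglyMeasurable.mul
      (measurable_norm.pow_const _).aestronglyMeasurable
  refine integrable_and_integral_le_of_lintegral_ofReal_le hmeas (ae_of_all _ hnonneg)
    (by positivity) ?_
  calc ∫⁻ x, ENNReal.ofReal (‖f x‖ ^ (q : ℝ) * ‖x‖ ^ (-c)) ∂μ
      = ∫⁻ x, ‖f x‖ₑ ^ (q : ℝ) * ENNReal.ofReal (‖x‖ ^ (-c)) ∂μ := by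
        simp_rw [ENNReal.ofReal_mul (rpow_nonneg (norm_nonneg _) _),
          ← ENNReal.ofReal_rpow_of_nonneg (norm_nonneg _) q.coe_nonneg, ofReal_norm]
    _ ≤ C * max (eLpNorm f 2 μ) (eLpNorm (fderiv ℝ f) 2 μ) ^ (q : ℝ) := hC f hf hf₂
    _ ≤ C * ENNReal.ofReal (H ^ (1 / 2 : ℝ)) ^ (q : ℝ) := by
        gcongr
        exact max_eLpNorm_two_le_integral_sum_sq b hf₂ hf₂'
    _ = ENNReal.ofReal (C * H ^ (q / 2 : ℝ)) := by
        rw [ENNReal.ofReal_rpow_of_nonneg (by positivity) q.coe_nonneg, ← rpow_mul hH,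
          one_div_mul_eq_div, ENNReal.ofReal_mul C.coe_nonneg, ENNReal.ofReal_coe_nnreal]
    _ ≤ ENNReal.ofReal ((C + 1) * H ^ (q / 2 : ℝ)) := by
        gcongr
        exact le_add_of_nonneg_right zero_le_one

/-- **Weighted `L¹` bound for the nonlinearity.** For `0 < c < 3/2` there is
`C = C(c) > 0` such that for every Schwartz `f : ℝ³ → ℂ`,
`∫ |f|³/|x|^c ≤ C ‖f‖_{H¹}³`. -/
theorem weighted_L1_nonlinearity_bound (c : ℝ) (hc0 : 0 < c) (hc1 : c < 3/2) :
    ∃ C : ℝ, 0 < C ∧ ∀ f : SchwartzMap E3 ℂ,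
      ∫ x : E3, ‖f x‖ ^ 3 * ‖x‖ ^ (-c)
        ≤ C * (∫ x : E3, (‖f x‖ ^ 2 + ∑ j : Fin 3, ‖pd j (⇑f) x‖ ^ 2))
            ^ ((3 : ℝ)/2) := by
  have hd : Module.finrank ℝ E3 = 3 := finrank_euclideanSpace_fin
  obtain ⟨C, hC, h⟩ := weighted_L1_nonlinearity_bound_general (F := ℂ) (q := 3) volume
    (EuclideanSpace.basisFun (Fin 3) ℝ) (by rw [hd]; norm_num) (by norm_num) hc0.le
    (hc1.trans_eq (by rw [hd]; norm_num))
  exact ⟨C, hC, fun f ↦ by simpa [pd, e3] using (h f (f.smooth 1) (f.memLp 2)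
    ((SchwartzMap.fderivCLM ℝ E3 ℂ f).memLp 2 volume)).2⟩
end
end

section
/- (Interaction Morawetz estimate) Let a > 0, 0 < b < 1, λ = 1, and let u be a smooth Schwartz solution of (INLS) with E := sup_{t∈ℝ} ‖u(t)‖_{H¹(ℝ³)} < ∞. Then there is a constant C > 0, depending only on a and b, such that ∫_ℝ ∫_{ℝ³} |u(t,x)|⁴ dx dt ≤ C E⁴. -/
open MeasureTheory Real Filter
open scoped BigOperators Topology

noncomputable section

/-!
The proof is a virial argument with the regularised weight `⟨x⟩ = √(|x|² + ε²)`. Let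
`pₖ = ⟪i u, ∂ₖu⟫` be the momentum density, and set

  `N(t) = ∫ ∇⟨x⟩ · p(x) dx`,  `M(t) = ∬ |u(y)|² ∇⟨·⟩(x - y) · p(x) dx dy`.

Since `|∇⟨·⟩| ≤ 1`, both are bounded in terms of the `H¹` norm. In `dM/dt` convexity of the weight
makes the stress and mass-flux terms combine into a nonnegative quantity, and the defocusing
nonlinearity pushes outwards. What remains is `½ ∬ |u(y)|² (-Δ²⟨·⟩)(x - y) |u(x)|² dx dy`, whose
kernel is `15 ε⁴ ⟨x⟩⁻⁷`, an approximate identity up to a constant as `ε → 0`, so that this term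
tends to a multiple of `∫ |u|⁴`.

The potential `a|x|⁻² + λ|x|⁻ᵇ|u|²` is not translation invariant, so in `dM/dt` it leaves a force
term of indefinite sign, of size at most `∫ |u|² · ∫ F` with `F ≥ 0` a radial force density. The
same `F` appears with a favourable sign in `dN/dt`, up to an error `O(ε)` which is where regularity
of `u` at the origin enters. Integrating `d/dt (M + m N)`, with `m` a bound on the mass, over
`[-T, T]` and letting `ε → 0`, then `T → ∞`, gives the estimate with a constant independent of `a`
and `b`.
-/

open Asymptotics Set
open scoped InnerProductSpace ContDiff

section Decay

variable {F : Type*} [NormedAddCommGroup F]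

/-- The integrable profile `(1 + ‖x‖)⁻⁴` that dominates a Schwartz function and its derivatives. -/
def decay (x : E3) : ℝ := (1 + ‖x‖) ^ (-4 : ℝ)

/-- Measurable functions bounded by a multiple of the integrable profile `decay`. -/
@[fun_prop]
def Decays (f : E3 → F) : Prop := AEStronglyMeasurable f ∧ f =O[⊤] decay

/-- Measurable bounded functions, the multipliers of the class `Decays`. -/
@[fun_prop]
def IsMultiplier (f : E3 → F) : Prop := AEStronglyMeasurable f ∧ f =O[⊤] fun _ => (1 : ℝ)

lemma decay_nonneg (x : E3) : 0 ≤ decay x := by unfold decay; positivity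

lemma decay_le_one (x : E3) : decay x ≤ 1 :=
  rpow_le_one_of_one_le_of_nonpos (by linarith [norm_nonneg x]) (by norm_num)

lemma integrable_decay : Integrable decay :=
  integrable_one_add_norm (by rw [finrank_euclideanSpace_fin]; norm_num)

lemma decay_isBigO_one : decay =O[⊤] fun _ => (1 : ℝ) :=
  .of_bound 1 <| by simp [abs_of_nonneg, decay_nonneg, decay_le_one]

lemma Decays.of_norm_le {f : E3 → F} (hf : AEStronglyMeasurable f) {C : ℝ}
    (h : ∀ x, ‖f x‖ ≤ C * decay x) : Decays f :=
  ⟨hf, .of_bound C <| by simpa [abs_of_nonneg, decay_nonneg] using h⟩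

lemma Decays.mono {G : Type*} [NormedAddCommGroup G] {f : E3 → F} {g : E3 → G} (hg : Decays g)
    (hf : AEStronglyMeasurable f) (h : ∀ x, ‖f x‖ ≤ ‖g x‖) : Decays f :=
  ⟨hf, (IsBigO.of_bound 1 <| by simpa using h).trans hg.2⟩

lemma Decays.exists_bound {f : E3 → F} (hf : Decays f) :
    ∃ C, ∀ x, ‖f x‖ ≤ C * decay x := by
  simpa [abs_of_nonneg, decay_nonneg, isBigO_top] using hf.2

lemma IsMultiplier.exists_bound {f : E3 → F} (hf : IsMultiplier f) : ∃ C, ∀ x, ‖f x‖ ≤ C := by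
  obtain ⟨C, hC⟩ := hf.2.bound
  exact ⟨C, by simpa using hC⟩

lemma IsMultiplier.of_norm_le {f : E3 → F} (hf : AEStronglyMeasurable f) {C : ℝ}
    (h : ∀ x, ‖f x‖ ≤ C) : IsMultiplier f :=
  ⟨hf, .of_bound C <| by simpa using h⟩

lemma Decays.integrable {f : E3 → F} (hf : Decays f) : Integrable f := by
  obtain ⟨C, hC⟩ := hf.exists_bound
  exact (integrable_decay.const_mul C).mono' hf.1 (.of_forall hC)

@[fun_prop]
lemma Decays.isMultiplier {f : E3 → F} (hf : Decays f) : IsMultiplier f :=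
  ⟨hf.1, hf.2.trans decay_isBigO_one⟩

@[fun_prop]
lemma isMultiplier_const (c : F) : IsMultiplier fun _ => c :=
  ⟨aestronglyMeasurable_const, isBigO_const_const c one_ne_zero _⟩

@[fun_prop]
lemma Decays.add {f g : E3 → F} (hf : Decays f) (hg : Decays g) : Decays fun x => f x + g x :=
  ⟨hf.1.add hg.1, hf.2.add hg.2⟩

@[fun_prop]
lemma Decays.sub {f g : E3 → F} (hf : Decays f) (hg : Decays g) : Decays fun x => f x - g x :=
  ⟨hf.1.sub hg.1, hf.2.sub hg.2⟩

@[fun_prop]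
lemma Decays.norm {f : E3 → F} (hf : Decays f) : Decays fun x => ‖f x‖ :=
  ⟨hf.1.norm, hf.2.norm_left⟩

@[fun_prop]
lemma Decays.sum {ι : Type*} {s : Finset ι} {f : ι → E3 → F} (hf : ∀ i, Decays (f i)) :
    Decays fun x => ∑ i ∈ s, f i x :=
  ⟨by simpa using Finset.aestronglyMeasurable_fun_sum s fun i _ => (hf i).1,
    .fun_sum fun i _ => (hf i).2⟩

@[fun_prop]
lemma IsMultiplier.sum {ι : Type*} {s : Finset ι} {f : ι → E3 → F}
    (hf : ∀ i, IsMultiplier (f i)) : IsMultiplier fun x => ∑ i ∈ s, f i x :=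
  ⟨by simpa using Finset.aestronglyMeasurable_fun_sum s fun i _ => (hf i).1,
    .fun_sum fun i _ => (hf i).2⟩

@[fun_prop]
lemma IsMultiplier.neg {f : E3 → F} (hf : IsMultiplier f) : IsMultiplier fun x => -f x :=
  ⟨hf.1.neg, hf.2.neg_left⟩

@[fun_prop]
lemma IsMultiplier.add {f g : E3 → F} (hf : IsMultiplier f) (hg : IsMultiplier g) :
    IsMultiplier fun x => f x + g x :=
  ⟨hf.1.add hg.1, hf.2.add hg.2⟩

@[fun_prop]
lemma IsMultiplier.sub {f g : E3 → F} (hf : IsMultiplier f) (hg : IsMultiplier g) :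
    IsMultiplier fun x => f x - g x :=
  ⟨hf.1.sub hg.1, hf.2.sub hg.2⟩

lemma IsMultiplier.comp_sub_right {f : E3 → F} (hf : IsMultiplier f) (y : E3) :
    IsMultiplier fun x => f (x - y) :=
  ⟨hf.1.comp_measurePreserving (measurePreserving_sub_right volume y),
    hf.2.comp_tendsto tendsto_top⟩

@[fun_prop]
lemma IsMultiplier.mul {f g : E3 → ℝ} (hf : IsMultiplier f) (hg : IsMultiplier g) :
    IsMultiplier fun x => f x * g x :=
  ⟨hf.1.mul hg.1, (hf.2.mul hg.2).congr_right fun _ => one_mul 1⟩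

@[fun_prop]
lemma IsMultiplier.pow {f : E3 → ℝ} (hf : IsMultiplier f) (n : ℕ) :
    IsMultiplier fun x => f x ^ n := by
  induction n with
  | zero => simpa using isMultiplier_const (1 : ℝ)
  | succ n ih => simpa only [pow_succ] using ih.mul hf

@[fun_prop]
lemma Decays.mul_isMultiplier {f g : E3 → ℝ} (hf : Decays f) (hg : IsMultiplier g) :
    Decays fun x => f x * g x :=
  ⟨hf.1.mul hg.1, by simpa using hf.2.mul hg.2⟩

@[fun_prop]
lemma IsMultiplier.mul_decays {f g : E3 → ℝ} (hf : IsMultiplier f) (hg : Decays g) :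
    Decays fun x => f x * g x := by
  simpa only [mul_comm] using hg.mul_isMultiplier hf

@[fun_prop]
lemma Decays.pow {f : E3 → ℝ} (hf : Decays f) (n : ℕ) [NeZero n] : Decays fun x => f x ^ n := by
  obtain ⟨k, rfl⟩ := Nat.exists_eq_succ_of_ne_zero (NeZero.ne n)
  simpa only [pow_succ] using (hf.isMultiplier.pow k).mul_decays hf

variable [InnerProductSpace ℝ F]

@[fun_prop]
lemma Decays.inner_isMultiplier {f g : E3 → F} (hf : Decays f) (hg : IsMultiplier g) :
    Decays fun x => ⟪f x, g x⟫_ℝ :=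
  (hf.norm.mul_isMultiplier ⟨hg.1.norm, hg.2.norm_left⟩).mono (hf.1.inner hg.1) fun x => by
    simpa using norm_inner_le_norm (𝕜 := ℝ) (f x) (g x)

@[fun_prop]
lemma IsMultiplier.inner_decays {f g : E3 → F} (hf : IsMultiplier f) (hg : Decays g) :
    Decays fun x => ⟪f x, g x⟫_ℝ := by
  simpa only [real_inner_comm] using hg.inner_isMultiplier hf

@[fun_prop]
lemma Decays.const_mul {f : E3 → ℂ} (hf : Decays f) (c : ℂ) : Decays fun x => c * f x :=
  ⟨hf.1.const_mul c, hf.2.const_mul_left c⟩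

end Decay

section PartialDerivatives

variable {F : Type*} [NormedAddCommGroup F] [NormedSpace ℝ F] {j : Fin 3}

/-- `f'` is the `j`-th partial derivative of `f` at every point; `f` need not be differentiable
in the other directions. -/
def HasPartialDeriv (j : Fin 3) (f f' : E3 → F) : Prop :=
  ∀ x, HasLineDerivAt ℝ f (f' x) x (e3 j)

namespace HasPartialDeriv

lemma of_differentiable {f : E3 → F} (hf : Differentiable ℝ f) :
    HasPartialDeriv j f fun x => fderiv ℝ f x (e3 j) :=
  fun x => (hf x).hasFDerivAt.hasLineDerivAt _

lemma add {f f' g g' : E3 → F} (hf : HasPartialDeriv j f f') (hg : HasPartialDeriv j g g') :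
    HasPartialDeriv j (fun x => f x + g x) fun x => f' x + g' x :=
  fun x => (hf x).fun_add (hg x)

lemma sub {f f' g g' : E3 → F} (hf : HasPartialDeriv j f f') (hg : HasPartialDeriv j g g') :
    HasPartialDeriv j (fun x => f x - g x) fun x => f' x - g' x :=
  fun x => (hf x).fun_sub (hg x)

lemma sum {ι : Type*} {s : Finset ι} {f f' : ι → E3 → F}
    (hf : ∀ i, HasPartialDeriv j (f i) (f' i)) :
    HasPartialDeriv j (fun x => ∑ i ∈ s, f i x) fun x => ∑ i ∈ s, f' i x :=
  fun x => HasDerivAt.fun_sum fun i _ => hf i x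

lemma mul {A : Type*} [NormedRing A] [NormedAlgebra ℝ A] {f f' g g' : E3 → A}
    (hf : HasPartialDeriv j f f') (hg : HasPartialDeriv j g g') :
    HasPartialDeriv j (fun x => f x * g x) fun x => f' x * g x + f x * g' x := fun x => by
  simpa [HasLineDerivAt] using HasDerivAt.fun_mul (hf x) (hg x)

lemma const_mul {A : Type*} [NormedRing A] [NormedAlgebra ℝ A] {f f' : E3 → A}
    (hf : HasPartialDeriv j f f') (c : A) :
    HasPartialDeriv j (fun x => c * f x) fun x => c * f' x :=
  fun x => HasDerivAt.const_mul c (hf x)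

lemma pow {f f' : E3 → ℝ} (hf : HasPartialDeriv j f f') (n : ℕ) :
    HasPartialDeriv j (fun x => f x ^ n) fun x => n * f x ^ (n - 1) * f' x := fun x => by
  simpa [HasLineDerivAt] using HasDerivAt.fun_pow (hf x) n

lemma inner {F : Type*} [NormedAddCommGroup F] [InnerProductSpace ℝ F] {f f' g g' : E3 → F}
    (hf : HasPartialDeriv j f f') (hg : HasPartialDeriv j g g') :
    HasPartialDeriv j (fun x => ⟪f x, g x⟫_ℝ) fun x => ⟪f' x, g x⟫_ℝ + ⟪f x, g' x⟫_ℝ :=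
  fun x => by simpa [HasLineDerivAt, add_comm] using HasDerivAt.inner ℝ (hf x) (hg x)

lemma neg {f f' : E3 → F} (hf : HasPartialDeriv j f f') :
    HasPartialDeriv j (fun x => -f x) fun x => -f' x := fun x => (hf x).fun_neg

lemma integral_eq_zero {f f' : E3 → ℝ} (h : HasPartialDeriv j f f') (hf : Integrable f)
    (hf' : Integrable f') : ∫ x, f' x = 0 := by
  simpa using integral_bilinear_hasLineDerivAt_right_eq_neg_left_of_integrable
    (f := fun _ : E3 => (1 : ℝ)) (f' := 0) (B := ContinuousLinearMap.mul ℝ ℝ) (by simp)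
    (by simpa using hf') (by simpa using hf)
    (fun x _ => by simpa [HasLineDerivAt] using hasDerivAt_const (0 : ℝ) (1 : ℝ)) (fun x _ => h x)

end HasPartialDeriv

lemma integral_divergence_eq_zero {X X' : Fin 3 → E3 → ℝ}
    (h : ∀ j, HasPartialDeriv j (X j) (X' j)) (hX : ∀ j, Decays (X j))
    (hX' : ∀ j, Decays (X' j)) : ∫ x, ∑ j, X' j x = 0 := by
  rw [integral_finsetSum _ fun j _ => (hX' j).integrable]
  exact Finset.sum_eq_zero fun j _ => (h j).integral_eq_zero (hX j).integrable (hX' j).integrable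

end PartialDerivatives

section Smooth

variable {f : E3 → ℂ} {w : E3 → ℝ}

lemma contDiff_pd (hf : ContDiff ℝ ∞ f) (j : Fin 3) : ContDiff ℝ ∞ (pd j f) :=
  (hf.fderiv_right (m := ∞) le_rfl).clm_apply contDiff_const

lemma contDiff_pdR (hw : ContDiff ℝ ∞ w) (j : Fin 3) : ContDiff ℝ ∞ (pdR j w) :=
  (hw.fderiv_right (m := ∞) le_rfl).clm_apply contDiff_const

lemma contDiff_lapR (hw : ContDiff ℝ ∞ w) : ContDiff ℝ ∞ (lapR w) :=
  ContDiff.sum fun j _ => contDiff_pdR (contDiff_pdR hw j) j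

lemma hasPartialDeriv_pd (hf : ContDiff ℝ ∞ f) (j : Fin 3) : HasPartialDeriv j f (pd j f) :=
  .of_differentiable (hf.differentiable (by simp))

lemma hasPartialDeriv_pdR (hw : ContDiff ℝ ∞ w) (j : Fin 3) : HasPartialDeriv j w (pdR j w) :=
  .of_differentiable (hw.differentiable (by simp))

lemma fderiv_fderiv_apply {E F : Type*} [NormedAddCommGroup E] [NormedSpace ℝ E]
    [NormedAddCommGroup F] [NormedSpace ℝ F] {g : E → F} (hg : ContDiff ℝ ∞ g) (v w x : E) :
    fderiv ℝ (fun y => fderiv ℝ g y w) x v = fderiv ℝ (fderiv ℝ g) x v w := by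
  have hg' : Differentiable ℝ (fderiv ℝ g) :=
    (hg.fderiv_right (m := ∞) le_rfl).differentiable (by simp)
  have h := (hg' x).hasFDerivAt.clm_apply (hasFDerivAt_const w x)
  simpa using congr($(h.fderiv) v)

lemma fderiv_fderiv_comm {E F : Type*} [NormedAddCommGroup E] [NormedSpace ℝ E]
    [NormedAddCommGroup F] [NormedSpace ℝ F] {g : E → F} (hg : ContDiff ℝ ∞ g) (v w x : E) :
    fderiv ℝ (fun y => fderiv ℝ g y w) x v = fderiv ℝ (fun y => fderiv ℝ g y v) x w := by
  rw [fderiv_fderiv_apply hg, fderiv_fderiv_apply hg]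
  exact (hg.contDiffAt.isSymmSndFDerivAt (by
    rw [minSmoothness_of_isRCLikeNormedField]; exact WithTop.coe_le_coe.mpr le_top)) _ _

lemma pd_comm (hf : ContDiff ℝ ∞ f) (j k : Fin 3) (x : E3) :
    pd j (pd k f) x = pd k (pd j f) x := fderiv_fderiv_comm hf _ _ x

end Smooth

section Virial

/-- A smooth weight whose derivatives entering the virial identity are bounded. Only the gradient
acts as a multiplier, so the weight itself may grow. -/
structure IsVirialWeight (w : E3 → ℝ) : Prop where
  contDiff : ContDiff ℝ ∞ w
  grad (k : Fin 3) : IsMultiplier (pdR k w)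
  hess (j k : Fin 3) : IsMultiplier (pdR j (pdR k w))
  grad_lapR (j : Fin 3) : IsMultiplier (pdR j (lapR w))
  hess_lapR (j : Fin 3) : IsMultiplier (pdR j (pdR j (lapR w)))

/-- Smooth functions that decay together with their derivatives of order at most two. -/
structure IsDecayingState (u : E3 → ℂ) : Prop where
  contDiff : ContDiff ℝ ∞ u
  decays : Decays u
  decays_pd (j : Fin 3) : Decays (pd j u)
  decays_pd_pd (j k : Fin 3) : Decays (pd j (pd k u))

lemma IsVirialWeight.lapR {w : E3 → ℝ} (hw : IsVirialWeight w) : IsMultiplier (lapR w) :=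
  .sum fun j => hw.hess j j

lemma IsVirialWeight.lapR_lapR {w : E3 → ℝ} (hw : IsVirialWeight w) :
    IsMultiplier (_root_.lapR (_root_.lapR w)) :=
  .sum hw.hess_lapR

lemma IsDecayingState.decays_lap {u : E3 → ℂ} (hu : IsDecayingState u) : Decays (lap u) :=
  .sum fun j => hu.decays_pd_pd j j

variable {w : E3 → ℝ} {u v : E3 → ℂ}

/-- The density of the real pairing of `g` with `2 ∇w · ∇u + (Δw) u`, the commutator `[Δ, w] u`. -/
def virialPairing (w : E3 → ℝ) (u g : E3 → ℂ) (x : E3) : ℝ :=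
  2 * ∑ k, pdR k w x * ⟪pd k u x, g x⟫_ℝ + lapR w x * ⟪u x, g x⟫_ℝ

lemma IsVirialWeight.decays_virialPairing {g : E3 → ℂ} (hw : IsVirialWeight w)
    (hu : IsDecayingState u) (hg : Decays g) : Decays (virialPairing w u g) := by
  obtain ⟨-, hw₁, -⟩ := id hw
  obtain ⟨-, hu₀, hu₁, -⟩ := hu
  have hΔw := hw.lapR
  unfold virialPairing
  fun_prop

/-- The flux whose divergence turns the dispersive part of the virial into a quadratic form in
`∇u`. -/
def virialFlux (w : E3 → ℝ) (u : E3 → ℂ) (j : Fin 3) (x : E3) : ℝ :=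
  2 * ∑ k, pdR k w x * ⟪pd k u x, pd j u x⟫_ℝ - pdR j w x * ∑ k, ⟪pd k u x, pd k u x⟫_ℝ
    + (lapR w x * ⟪u x, pd j u x⟫_ℝ - 2⁻¹ * (pdR j (lapR w) x * ⟪u x, u x⟫_ℝ))

/-- The `j`-th partial derivative of `virialFlux w u j`. -/
def virialFluxDeriv (w : E3 → ℝ) (u : E3 → ℂ) (j : Fin 3) (x : E3) : ℝ :=
  2 * ∑ k, (pdR j (pdR k w) x * ⟪pd k u x, pd j u x⟫_ℝ
      + pdR k w x * (⟪pd j (pd k u) x, pd j u x⟫_ℝ + ⟪pd k u x, pd j (pd j u) x⟫_ℝ))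
    - (pdR j (pdR j w) x * ∑ k, ⟪pd k u x, pd k u x⟫_ℝ
      + pdR j w x * ∑ k, (⟪pd j (pd k u) x, pd k u x⟫_ℝ + ⟪pd k u x, pd j (pd k u) x⟫_ℝ))
    + (pdR j (lapR w) x * ⟪u x, pd j u x⟫_ℝ
      + lapR w x * (⟪pd j u x, pd j u x⟫_ℝ + ⟪u x, pd j (pd j u) x⟫_ℝ)
      - 2⁻¹ * (pdR j (pdR j (lapR w)) x * ⟪u x, u x⟫_ℝ
        + pdR j (lapR w) x * (⟪pd j u x, u x⟫_ℝ + ⟪u x, pd j u x⟫_ℝ)))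

lemma hasPartialDeriv_virialFlux (hw : ContDiff ℝ ∞ w) (hu : ContDiff ℝ ∞ u) (j : Fin 3) :
    HasPartialDeriv j (virialFlux w u j) (virialFluxDeriv w u j) := by
  have dw (k) := hasPartialDeriv_pdR (contDiff_pdR hw k) j
  have dΔw := hasPartialDeriv_pdR (contDiff_lapR hw) j
  have dΔw' := hasPartialDeriv_pdR (contDiff_pdR (contDiff_lapR hw) j) j
  have du := hasPartialDeriv_pd hu j
  have du' (k) := hasPartialDeriv_pd (contDiff_pd hu k) j
  exact (((HasPartialDeriv.sum fun k => (dw k).mul ((du' k).inner (du' j))).const_mul 2).sub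
    ((dw j).mul (.sum fun k => (du' k).inner (du' k)))).add
      ((dΔw.mul (du.inner (du' j))).sub ((dΔw'.mul (du.inner du)).const_mul 2⁻¹))

lemma sum_virialFluxDeriv (hu : ContDiff ℝ ∞ u) (x : E3) :
    ∑ j, virialFluxDeriv w u j x
      = virialPairing w u (lap u) x - (2⁻¹ * (lapR (lapR w) x * ‖u x‖ ^ 2)
        - 2 * ∑ j, ∑ k, pdR j (pdR k w) x * ⟪pd j u x, pd k u x⟫_ℝ) := by
  have hcomm (j k : Fin 3) := pd_comm hu j k x
  simp only [virialFluxDeriv, virialPairing, Fin.sum_univ_three, ← real_inner_self_eq_norm_sq]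
  rw [show lapR (lapR w) x = pdR 0 (pdR 0 (lapR w)) x + pdR 1 (pdR 1 (lapR w)) x
    + pdR 2 (pdR 2 (lapR w)) x from Fin.sum_univ_three _]
  simp only [show lapR w x = pdR 0 (pdR 0 w) x + pdR 1 (pdR 1 w) x + pdR 2 (pdR 2 w) x from
      Fin.sum_univ_three _, show lap u x = pd 0 (pd 0 u) x + pd 1 (pd 1 u) x + pd 2 (pd 2 u) x from
      Fin.sum_univ_three _, inner_add_right, hcomm 1 0, hcomm 2 0, hcomm 2 1]
  simp only [real_inner_comm]
  ring_nf

lemma integral_virialPairing_lap (hw : IsVirialWeight w) (hu : IsDecayingState u) :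
    ∫ x, virialPairing w u (lap u) x
      = ∫ x, (2⁻¹ * (lapR (lapR w) x * ‖u x‖ ^ 2)
          - 2 * ∑ j, ∑ k, pdR j (pdR k w) x * ⟪pd j u x, pd k u x⟫_ℝ) := by
  obtain ⟨hw₀, hw₁, hw₂, hw₃, hw₄⟩ := id hw
  obtain ⟨hu₀, hu₁, hu₂, hu₃⟩ := id hu
  have hΔw := hw.lapR
  have hΔΔw := hw.lapR_lapR
  have div_eq_zero := integral_divergence_eq_zero (hasPartialDeriv_virialFlux hw₀ hu₀)
    (fun j => by unfold virialFlux; fun_prop) (fun j => by unfold virialFluxDeriv; fun_prop)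
  simp only [sum_virialFluxDeriv hu₀] at div_eq_zero
  rwa [integral_sub, sub_eq_zero] at div_eq_zero
  · exact (hw.decays_virialPairing hu hu.decays_lap).integrable
  · exact Decays.integrable (by fun_prop)

lemma inner_I_mul_left (z z' : ℂ) : ⟪Complex.I * z, z'⟫_ℝ = -⟪z, Complex.I * z'⟫_ℝ := by
  simp only [Complex.inner, map_mul, Complex.mul_re, Complex.mul_im, Complex.conj_re,
    Complex.conj_im, Complex.I_re, Complex.I_im]
  ring

lemma inner_I_mul_self (z : ℂ) : ⟪Complex.I * z, z⟫_ℝ = 0 := by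
  simp only [Complex.inner, map_mul, Complex.mul_re, Complex.mul_im, Complex.conj_re,
    Complex.conj_im, Complex.I_re, Complex.I_im]
  ring

lemma inner_I_mul_I_mul (z z' : ℂ) : ⟪Complex.I * z, Complex.I * z'⟫_ℝ = ⟪z, z'⟫_ℝ := by
  simp [Complex.inner]

/-- The momentum density `Im (ū ∂ₖu)`. -/
def momentum (u : E3 → ℂ) (k : Fin 3) (x : E3) : ℝ := ⟪Complex.I * u x, pd k u x⟫_ℝ

/-- The time derivative of `momentum u k` when `v` is the time derivative of `u`. -/
def momentumDt (u v : E3 → ℂ) (k : Fin 3) (x : E3) : ℝ :=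
  ⟪Complex.I * v x, pd k u x⟫_ℝ + ⟪Complex.I * u x, pd k v x⟫_ℝ

lemma integral_gradient_mul_momentumDt (hw : IsVirialWeight w) (hu : IsDecayingState u)
    (hv : ContDiff ℝ ∞ v) (hv₀ : Decays v) (hv₁ : ∀ k, Decays (pd k v)) :
    ∫ x, ∑ k, pdR k w x * momentumDt u v k x
      = ∫ x, virialPairing w u (fun y => Complex.I * v y) x := by
  obtain ⟨hw₀, hw₁, hw₂, -⟩ := id hw
  obtain ⟨hu₀, hu₁, hu₂, -⟩ := id hu
  have div_eq_zero := integral_divergence_eq_zero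
    (fun k => (hasPartialDeriv_pdR (contDiff_pdR hw₀ k) k).mul
      (((hasPartialDeriv_pd hu₀ k).const_mul Complex.I).inner (hasPartialDeriv_pd hv k)))
    (fun k => by fun_prop) (fun k => by fun_prop)
  rw [← sub_eq_zero, ← integral_sub, ← div_eq_zero]
  · congr with x
    simp only [show lapR w x = ∑ k, pdR k (pdR k w) x from rfl, momentumDt, virialPairing,
      Fin.sum_univ_three, inner_I_mul_left (u x) (v x), inner_I_mul_left (pd _ u x) (v x),
      real_inner_comm (pd _ u x) (Complex.I * v x)]
    ring
  · unfold momentumDt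
    exact Decays.integrable (by fun_prop)
  · exact (hw.decays_virialPairing hu (hv₀.const_mul Complex.I)).integrable

end Virial

section Slice

/-- The full potential `a |x|⁻² + λ |x|⁻ᵇ |u|²` acting on `u`. -/
def effectivePotential (a b lam : ℝ) (u : E3 → ℂ) (x : E3) : ℝ :=
  a / ‖x‖ ^ 2 + lam * ‖x‖ ^ (-b) * ‖u x‖ ^ 2

/-- A solution `u` at a fixed time, together with its time derivative `v`. -/
structure IsSlice (a b lam : ℝ) (u v : E3 → ℂ) : Prop where
  state : IsDecayingState u
  contDiff_dt : ContDiff ℝ ∞ v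
  decays_dt : Decays v
  decays_pd_dt (j : Fin 3) : Decays (pd j v)
  eqn (x : E3) (hx : x ≠ 0) : Complex.I * v x + lap u x
    = (effectivePotential a b lam u x : ℂ) * u x

/-- The function whose gradient is the radial force in the momentum law: `∂ₖ (pressure)` is
`2 V Re (ū ∂ₖu) - xₖ κ` for the effective potential `V` and `κ = radialForce`. -/
def pressure (a b lam : ℝ) (u : E3 → ℂ) (x : E3) : ℝ :=
  a * ‖u x‖ ^ 2 / ‖x‖ ^ 2 + lam / 2 * ‖x‖ ^ (-b) * ‖u x‖ ^ 4

/-- The density `κ` of the repulsive radial force `x κ` coming from the singular coefficients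
`a |x|⁻²` and `λ |x|⁻ᵇ`. -/
def radialForce (a b lam : ℝ) (u : E3 → ℂ) (x : E3) : ℝ :=
  2 * a * ‖u x‖ ^ 2 / ‖x‖ ^ 4 + lam * b / 2 * ‖x‖ ^ (-b) * ‖u x‖ ^ 4 / ‖x‖ ^ 2

lemma radialForce_eq (a b lam : ℝ) (u : E3 → ℂ) (x : E3) : radialForce a b lam u x
    = (2 * a * (‖u x‖ / ‖x‖ ^ 2) + b / 2 * (lam * ‖x‖ ^ (-b) * ‖u x‖ ^ 3))
      * (‖u x‖ / ‖x‖ ^ 2) := by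
  rw [radialForce]; ring

lemma abs_coord_le_norm (x : E3) (k : Fin 3) : |x k| ≤ ‖x‖ := by
  simpa using PiLp.norm_apply_le x k

lemma hasLineDerivAt_norm {x : E3} (hx : x ≠ 0) (k : Fin 3) :
    HasLineDerivAt ℝ (fun y : E3 => ‖y‖) (x k / ‖x‖) x (e3 k) := by
  have h := ((hasStrictFDerivAt_norm_sq x).hasFDerivAt.sqrt (by simpa using hx)).hasLineDerivAt
    (e3 k)
  simp only [sqrt_sq (norm_nonneg _)] at h
  refine HasDerivAt.congr_deriv h ?_
  simp only [e3, one_div, smul_apply, coe_innerSL_apply, EuclideanSpace.inner_single_right,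
    ringHom_apply, one_mul, nsmul_eq_mul, Nat.cast_ofNat, smul_eq_mul]
  ring

variable {a b lam : ℝ} {u v : E3 → ℂ}

namespace IsSlice

lemma add_norm_eq (h : IsSlice a b lam u v) (ha : 0 ≤ a) (hlam : 0 ≤ lam) {x : E3}
    (hx : x ≠ 0) : a * (‖u x‖ / ‖x‖ ^ 2) + lam * ‖x‖ ^ (-b) * ‖u x‖ ^ 3
      = ‖Complex.I * v x + lap u x‖ := by
  rw [h.eqn x hx, effectivePotential, norm_mul, Complex.norm_real, norm_of_nonneg (by positivity)]
  ring

lemma decays_residual (h : IsSlice a b lam u v) :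
    Decays fun x => Complex.I * v x + lap u x :=
  (h.decays_dt.const_mul Complex.I).add h.state.decays_lap

lemma continuous (h : IsSlice a b lam u v) : Continuous u := h.state.contDiff.continuous

lemma exists_norm_le_norm_sq (h : IsSlice a b lam u v) (ha : 0 < a) (hlam : 0 ≤ lam) :
    ∃ C, ∀ x, ‖u x‖ ≤ C * ‖x‖ ^ 2 := by
  obtain ⟨C, hC⟩ := h.decays_residual.isMultiplier.exists_bound
  refine ⟨C / a, fun x => ?_⟩
  have hclosed : IsClosed {x : E3 | ‖u x‖ ≤ C / a * ‖x‖ ^ 2} :=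
    isClosed_le h.continuous.norm (by fun_prop)
  refine (hclosed.closure_subset_iff (s := {0}ᶜ)).2 (fun y hy => ?_)
    ((dense_compl_singleton (0 : E3)).closure_eq ▸ mem_univ x)
  have : 0 < ‖y‖ := norm_pos_iff.2 hy
  have hle : a * (‖u y‖ / ‖y‖ ^ 2) ≤ C :=
    (le_add_of_nonneg_right (by positivity)).trans ((h.add_norm_eq ha.le hlam hy).trans_le (hC y))
  rw [mem_ofPred_eq, div_mul_eq_mul_div, le_div_iff₀ ha]
  rw [mul_div_assoc', div_le_iff₀ (by positivity)] at hle
  linarith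

lemma apply_zero (h : IsSlice a b lam u v) (ha : 0 < a) (hlam : 0 ≤ lam) : u 0 = 0 := by
  obtain ⟨C, hC⟩ := h.exists_norm_le_norm_sq ha hlam
  simpa using hC 0

lemma add_norm_le (h : IsSlice a b lam u v) (ha : 0 < a) (hlam : 0 ≤ lam) (x : E3) :
    a * (‖u x‖ / ‖x‖ ^ 2) + lam * ‖x‖ ^ (-b) * ‖u x‖ ^ 3 ≤ ‖Complex.I * v x + lap u x‖ := by
  rcases eq_or_ne x 0 with rfl | hx
  · simp [h.apply_zero ha hlam]
  · exact (h.add_norm_eq ha.le hlam hx).le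

lemma decays_norm_div_sq (h : IsSlice a b lam u v) (ha : 0 < a) (hlam : 0 ≤ lam) :
    Decays fun x => ‖u x‖ / ‖x‖ ^ 2 := by
  have hu := h.continuous.measurable
  refine ((isMultiplier_const a⁻¹).mul_decays h.decays_residual.norm).mono
    (Measurable.aestronglyMeasurable (by fun_prop)) fun x => ?_
  have hle : a * (‖u x‖ / ‖x‖ ^ 2) ≤ ‖Complex.I * v x + lap u x‖ :=
    (le_add_of_nonneg_right (by positivity)).trans (h.add_norm_le ha hlam x)
  rw [norm_of_nonneg (by positivity), norm_of_nonneg (by positivity)]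
  exact (le_inv_mul_iff₀ ha).2 hle

lemma decays_nonlinearity (h : IsSlice a b lam u v) (ha : 0 < a) (hlam : 0 ≤ lam) :
    Decays fun x => lam * ‖x‖ ^ (-b) * ‖u x‖ ^ 3 := by
  have hu := h.continuous.measurable
  refine h.decays_residual.mono (Measurable.aestronglyMeasurable (by fun_prop)) fun x => ?_
  rw [norm_of_nonneg (by positivity)]
  exact (le_add_of_nonneg_left (by positivity)).trans (h.add_norm_le ha hlam x)

lemma decays_norm_mul_norm_div_sq (h : IsSlice a b lam u v) (ha : 0 < a) (hlam : 0 ≤ lam) :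
    Decays fun x => ‖x‖ * (‖u x‖ / ‖x‖ ^ 2) := by
  have hu := h.continuous.measurable
  refine (h.state.decays.norm.add (h.decays_norm_div_sq ha hlam)).mono
    (Measurable.aestronglyMeasurable (by fun_prop)) fun x => ?_
  rw [norm_of_nonneg (by positivity), norm_of_nonneg (by positivity)]
  rcases eq_or_ne x 0 with rfl | hx
  · simp
  have hx' : 0 < ‖x‖ := norm_pos_iff.2 hx
  calc ‖x‖ * (‖u x‖ / ‖x‖ ^ 2) ≤ (‖x‖ ^ 2 + 1) * (‖u x‖ / ‖x‖ ^ 2) := by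
        gcongr
        nlinarith [sq_nonneg (‖x‖ - 1)]
    _ = ‖u x‖ + ‖u x‖ / ‖x‖ ^ 2 := by field_simp

lemma decays_pressure (h : IsSlice a b lam u v) (ha : 0 < a) (hlam : 0 ≤ lam) :
    Decays (pressure a b lam u) := by
  have hq := (isMultiplier_const a).mul_decays (h.decays_norm_div_sq ha hlam)
  have hnl := (isMultiplier_const (2 : ℝ)⁻¹).mul_decays (h.decays_nonlinearity ha hlam)
  convert (hq.add hnl).mul_isMultiplier h.state.decays.norm.isMultiplier using 2 with x
  rw [pressure]; ring

lemma decays_radialForce (h : IsSlice a b lam u v) (ha : 0 < a) (hlam : 0 ≤ lam) :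
    Decays (radialForce a b lam u) := by
  have hq := h.decays_norm_div_sq ha hlam
  rw [funext (radialForce_eq a b lam u)]
  exact (((isMultiplier_const _).mul_decays hq).add ((isMultiplier_const _).mul_decays
    (h.decays_nonlinearity ha hlam))).mul_isMultiplier hq.isMultiplier

lemma decays_norm_mul_radialForce (h : IsSlice a b lam u v) (ha : 0 < a) (hlam : 0 ≤ lam) :
    Decays fun x => ‖x‖ * radialForce a b lam u x := by
  simp only [radialForce_eq, mul_left_comm ‖_‖]
  exact (((isMultiplier_const _).mul_decays (h.decays_norm_div_sq ha hlam)).add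
    ((isMultiplier_const _).mul_decays (h.decays_nonlinearity ha hlam))).mul_isMultiplier
      (h.decays_norm_mul_norm_div_sq ha hlam).isMultiplier

lemma decays_coord_mul_radialForce (h : IsSlice a b lam u v) (ha : 0 < a) (hlam : 0 ≤ lam)
    (k : Fin 3) : Decays fun x => x k * radialForce a b lam u x := by
  refine (h.decays_norm_mul_radialForce ha hlam).mono
    (AEStronglyMeasurable.mul (Continuous.aestronglyMeasurable (by fun_prop))
      (h.decays_radialForce ha hlam).1) fun x => ?_
  rw [norm_mul, norm_mul, norm_norm]
  gcongr
  exact abs_coord_le_norm x k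

lemma decays_effectivePotential_mul (h : IsSlice a b lam u v) (ha : 0 < a) (hlam : 0 ≤ lam) :
    Decays fun x => (effectivePotential a b lam u x : ℂ) * u x := by
  have hu := h.continuous.measurable
  refine h.decays_residual.mono ?_ fun x => ?_
  · unfold effectivePotential
    exact Measurable.aestronglyMeasurable (by fun_prop)
  · rcases eq_or_ne x 0 with rfl | hx
    · simp [h.apply_zero ha hlam]
    · rw [h.eqn x hx]

lemma pressure_isBigO (h : IsSlice a b lam u v) (ha : 0 < a) (hlam : 0 ≤ lam) :
    pressure a b lam u =O[𝓝 0] fun x => ‖x - 0‖ ^ 2 := by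
  obtain ⟨C, hC⟩ := h.exists_norm_le_norm_sq ha hlam
  obtain ⟨K, hK⟩ := h.decays_residual.isMultiplier.exists_bound
  refine .of_bound (K * C) (.of_forall fun x => ?_)
  have hx : 0 ≤ lam * ‖x‖ ^ (-b) * ‖u x‖ ^ 3 := by positivity
  calc ‖pressure a b lam u x‖
      = (a * (‖u x‖ / ‖x‖ ^ 2) + lam * ‖x‖ ^ (-b) * ‖u x‖ ^ 3 / 2) * ‖u x‖ := by
        rw [pressure, norm_of_nonneg (by positivity)]; ring
    _ ≤ K * (C * ‖x‖ ^ 2) := by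
        gcongr
        · exact (norm_nonneg _).trans (hK x)
        · linarith [(h.add_norm_le ha hlam x).trans (hK x)]
        · exact hC x
    _ = K * C * ‖‖x - 0‖ ^ 2‖ := by rw [sub_zero, norm_of_nonneg (sq_nonneg ‖x‖), mul_assoc]

lemma hasPartialDeriv_pressure (h : IsSlice a b lam u v) (ha : 0 < a) (hlam : 0 ≤ lam)
    (k : Fin 3) : HasPartialDeriv k (pressure a b lam u) fun x =>
      2 * ⟪(effectivePotential a b lam u x : ℂ) * u x, pd k u x⟫_ℝ
        - x k * radialForce a b lam u x := by
  intro x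
  rcases eq_or_ne x 0 with rfl | hx
  · simpa [h.apply_zero ha hlam] using
      ((h.pressure_isBigO ha hlam).hasFDerivAt one_lt_two).hasLineDerivAt (e3 k)
  · have hx' : 0 < ‖x‖ := norm_pos_iff.2 hx
    have hn : HasDerivAt (fun s : ℝ => ‖x + s • e3 k‖) _ 0 := hasLineDerivAt_norm hx k
    have hu := hasPartialDeriv_pd h.state.contDiff k
    have hρ : HasDerivAt (fun s : ℝ => ‖u (x + s • e3 k)‖ ^ 2) (2 * ⟪u x, pd k u x⟫_ℝ) 0 := by
      simp only [← real_inner_self_eq_norm_sq]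
      refine HasDerivAt.congr_deriv (hu.inner hu x) ?_
      simp only [real_inner_comm (u x)]; ring
    have hp := ((hρ.const_mul a).fun_div (hn.fun_pow 2) (by simpa using hx)).fun_add
      (((hn.rpow_const (p := -b) (.inl (by simpa using hx))).const_mul (lam / 2)).fun_mul
        (hρ.fun_pow 2))
    simp only [← pow_mul] at hp
    refine HasDerivAt.congr_deriv hp ?_
    simp only [zero_smul, add_zero, rpow_sub_one hx'.ne', effectivePotential, radialForce,
      ← Complex.real_smul, real_inner_smul_left]
    field_simp
    ring

lemma decays_power (h : IsSlice a b lam u v) (ha : 0 < a) (hlam : 0 ≤ lam) :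
    Decays fun x => lam / 2 * ‖x‖ ^ (-b) * ‖u x‖ ^ 4 := by
  convert ((isMultiplier_const (2 : ℝ)⁻¹).mul_decays
    (h.decays_nonlinearity ha hlam)).mul_isMultiplier h.state.decays.norm.isMultiplier using 2
  ring

lemma integral_virialPairing_effectivePotential {w : E3 → ℝ} (h : IsSlice a b lam u v)
    (ha : 0 < a) (hlam : 0 ≤ lam) (hw : IsVirialWeight w) :
    ∫ x, virialPairing w u (fun y => (effectivePotential a b lam u y : ℂ) * u y) x
      = ∫ x, (∑ k, pdR k w x * (x k * radialForce a b lam u x)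
        + lapR w x * (lam / 2 * ‖x‖ ^ (-b) * ‖u x‖ ^ 4)) := by
  obtain ⟨hw₀, hw₁, hw₂, -⟩ := id hw
  have hu₁ := h.state.decays_pd
  have hV := h.decays_effectivePotential_mul ha hlam
  have hp := h.decays_pressure ha hlam
  have hκ := h.decays_coord_mul_radialForce ha hlam
  have div_eq_zero := integral_divergence_eq_zero
    (fun k => (hasPartialDeriv_pdR (contDiff_pdR hw₀ k) k).mul
      (h.hasPartialDeriv_pressure ha hlam k))
    (fun k => (hw₁ k).mul_decays hp)
    (fun k => ((hw₂ k k).mul_decays hp).add ((hw₁ k).mul_decays (((isMultiplier_const 2).mul_decays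
      (hV.inner_isMultiplier (hu₁ k).isMultiplier)).sub (hκ k))))
  rw [← sub_eq_zero, ← integral_sub, ← div_eq_zero]
  · congr with x
    simp only [show lapR w x = ∑ k, pdR k (pdR k w) x from rfl, virialPairing, pressure,
      effectivePotential, Fin.sum_univ_three, ← Complex.real_smul, real_inner_smul_left,
      real_inner_smul_right, real_inner_self_eq_norm_sq, real_inner_comm (u x)]
    ring
  · exact (hw.decays_virialPairing h.state hV).integrable
  · exact (Decays.add (.sum fun k => (hw₁ k).mul_decays (hκ k))
      (hw.lapR.mul_decays (h.decays_power ha hlam))).integrable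

lemma integral_gradient_mul_momentumDt_eq {w : E3 → ℝ} (h : IsSlice a b lam u v)
    (ha : 0 < a) (hlam : 0 ≤ lam) (hw : IsVirialWeight w) :
    ∫ x, ∑ k, pdR k w x * momentumDt u v k x
      = (∫ x, (∑ k, pdR k w x * (x k * radialForce a b lam u x)
          + lapR w x * (lam / 2 * ‖x‖ ^ (-b) * ‖u x‖ ^ 4)))
        - ∫ x, (2⁻¹ * (lapR (lapR w) x * ‖u x‖ ^ 2)
          - 2 * ∑ j, ∑ k, pdR j (pdR k w) x * ⟪pd j u x, pd k u x⟫_ℝ) := by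
  rw [integral_gradient_mul_momentumDt hw h.state h.contDiff_dt h.decays_dt h.decays_pd_dt,
    ← h.integral_virialPairing_effectivePotential ha hlam hw,
    ← integral_virialPairing_lap hw h.state, ← integral_sub
    (hw.decays_virialPairing h.state (h.decays_effectivePotential_mul ha hlam)).integrable
    (hw.decays_virialPairing h.state h.state.decays_lap).integrable]
  refine integral_congr_ae ?_
  filter_upwards [Measure.ae_ne volume (0 : E3)] with x hx
  simp only [virialPairing, eq_sub_of_add_eq (h.eqn x hx), inner_sub_right, mul_sub,
    Finset.sum_sub_distrib]
  ring

/-- The mass law `∂ₜ|u|² = -2 div p` in weak form. -/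
lemma integral_inner_dt_mul {f : E3 → ℝ} (h : IsSlice a b lam u v) (hf : ContDiff ℝ ∞ f)
    (hf₀ : IsMultiplier f) (hf₁ : ∀ k, IsMultiplier (pdR k f)) :
    ∫ x, ⟪u x, v x⟫_ℝ * f x = ∫ x, ∑ k, momentum u k x * pdR k f x := by
  obtain ⟨hu₀, hu₁, hu₂, hu₃⟩ := h.state
  have hv := h.decays_dt
  have div_eq_zero := integral_divergence_eq_zero
    (fun k => (((hasPartialDeriv_pd hu₀ k).const_mul Complex.I).inner
      (hasPartialDeriv_pd (contDiff_pd hu₀ k) k)).mul (hasPartialDeriv_pdR hf k))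
    (fun k => by fun_prop) (fun k => by fun_prop)
  rw [eq_comm, ← sub_eq_zero, ← integral_sub, ← div_eq_zero]
  · refine integral_congr_ae ?_
    filter_upwards [Measure.ae_ne volume (0 : E3)] with x hx
    have mass_law : ∑ k, ⟪Complex.I * u x, pd k (pd k u) x⟫_ℝ = -⟪u x, v x⟫_ℝ := by
      rw [← inner_sum, show ∑ k, pd k (pd k u) x = lap u x from rfl,
        eq_sub_of_add_eq' (h.eqn x hx), ← Complex.real_smul, inner_sub_right,
        real_inner_smul_right, inner_I_mul_self, inner_I_mul_I_mul]
      ring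
    simp only [Fin.sum_univ_three] at mass_law
    simp only [momentum, inner_I_mul_self, Fin.sum_univ_three]
    linear_combination -f x * mass_law
  · unfold momentum
    exact Decays.integrable (by fun_prop)
  · exact Decays.integrable (by fun_prop)

end IsSlice

end Slice

section Translation

lemma pdR_comp_sub_right (w : E3 → ℝ) (k : Fin 3) (y : E3) :
    pdR k (fun x => w (x - y)) = fun x => pdR k w (x - y) := by
  ext x
  simp only [pdR, fderiv_comp_sub]

lemma lapR_comp_sub_right (w : E3 → ℝ) (y : E3) :
    lapR (fun x => w (x - y)) = fun x => lapR w (x - y) := by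
  ext x
  simp only [lapR, pdR_comp_sub_right]

lemma IsVirialWeight.comp_sub_right {w : E3 → ℝ} (hw : IsVirialWeight w) (y : E3) :
    IsVirialWeight fun x => w (x - y) where
  contDiff := hw.contDiff.comp (contDiff_id.sub contDiff_const)
  grad k := by simpa only [pdR_comp_sub_right] using (hw.grad k).comp_sub_right y
  hess j k := by simpa only [pdR_comp_sub_right] using (hw.hess j k).comp_sub_right y
  grad_lapR j := by
    simpa only [lapR_comp_sub_right, pdR_comp_sub_right] using (hw.grad_lapR j).comp_sub_right y
  hess_lapR j := by
    simpa only [lapR_comp_sub_right, pdR_comp_sub_right] using (hw.hess_lapR j).comp_sub_right y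

end Translation

section SoftNorm

/-- The regularization `√(‖x‖² + ε²)` of the Morawetz weight `‖x‖`. -/
def softNorm (ε : ℝ) (x : E3) : ℝ := √(‖x‖ ^ 2 + ε ^ 2)

/-- The reciprocal of `softNorm`, in which all derivatives of `softNorm` are polynomial. -/
def softNormInv (ε : ℝ) (x : E3) : ℝ := (softNorm ε x)⁻¹

lemma softNorm_sq (ε : ℝ) (x : E3) : softNorm ε x ^ 2 = ‖x‖ ^ 2 + ε ^ 2 :=
  sq_sqrt (by positivity)

lemma norm_le_softNorm (ε : ℝ) (x : E3) : ‖x‖ ≤ softNorm ε x :=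
  le_sqrt_of_sq_le (by nlinarith)

lemma le_softNorm (ε : ℝ) (x : E3) : ε ≤ softNorm ε x :=
  le_sqrt_of_sq_le (by nlinarith [sq_nonneg ‖x‖])

lemma softNormInv_nonneg (ε : ℝ) (x : E3) : 0 ≤ softNormInv ε x :=
  inv_nonneg.2 (sqrt_nonneg _)

lemma sum_coord_sq (x : E3) : ∑ k, x k ^ 2 = ‖x‖ ^ 2 :=
  (EuclideanSpace.real_norm_sq_eq x).symm

variable {ε : ℝ}

lemma softNorm_pos (hε : 0 < ε) (x : E3) : 0 < softNorm ε x := hε.trans_le (le_softNorm ε x)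

lemma softNorm_mul_softNormInv (hε : 0 < ε) (x : E3) : softNorm ε x * softNormInv ε x = 1 :=
  mul_inv_cancel₀ (softNorm_pos hε x).ne'

lemma softNorm_le (hε : 0 < ε) (x : E3) : softNorm ε x ≤ ‖x‖ + ε :=
  (sqrt_le_left (by positivity)).2 (by nlinarith [norm_nonneg x])

lemma contDiff_softNorm (hε : 0 < ε) : ContDiff ℝ ∞ (softNorm ε) :=
  ((contDiff_norm_sq ℝ).add contDiff_const).sqrt fun x => by positivity

lemma contDiff_softNormInv (hε : 0 < ε) : ContDiff ℝ ∞ (softNormInv ε) :=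
  (contDiff_softNorm hε).inv fun x => (softNorm_pos hε x).ne'

lemma HasPartialDeriv.pdR_eq {f f' : E3 → ℝ} {j : Fin 3} (h : HasPartialDeriv j f f')
    (hf : ContDiff ℝ ∞ f) (x : E3) : pdR j f x = f' x :=
  HasDerivAt.unique (hasPartialDeriv_pdR hf j x) (h x)

lemma hasPartialDeriv_coord (j k : Fin 3) :
    HasPartialDeriv j (fun x : E3 => x k) fun _ => if j = k then 1 else 0 := fun x => by
  have h := ((hasDerivAt_id (0 : ℝ)).mul_const (e3 j k)).const_add (x k)
  refine HasDerivAt.congr_deriv h ?_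
  simp [e3, eq_comm]

lemma pdR_softNorm (hε : 0 < ε) (k : Fin 3) :
    pdR k (softNorm ε) = fun x => x k * softNormInv ε x := by
  ext x
  have h := ((hasStrictFDerivAt_norm_sq x).hasFDerivAt.add_const (ε ^ 2)).sqrt
    (by positivity : ‖x‖ ^ 2 + ε ^ 2 ≠ 0)
  unfold pdR softNorm
  rw [h.fderiv]
  simp only [e3, one_div, smul_apply, coe_innerSL_apply, EuclideanSpace.inner_single_right,
    ringHom_apply, one_mul, nsmul_eq_mul, Nat.cast_ofNat, smul_eq_mul, softNormInv, softNorm]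
  ring

lemma pdR_softNormInv (hε : 0 < ε) (j : Fin 3) :
    pdR j (softNormInv ε) = fun x => -(pdR j (softNorm ε) x * softNormInv ε x ^ 2) := by
  ext x
  have h := ((contDiff_softNorm hε).differentiable (by simp) x).hasFDerivAt
  have hi := (hasDerivAt_inv (softNorm_pos hε x).ne').comp_hasFDerivAt x h
  refine (congr($(hi.fderiv) (e3 j)) :).trans ?_
  simp only [neg_smul, neg_apply, smul_apply, smul_eq_mul, pdR, softNormInv, inv_pow]
  ring

lemma pdR_pdR_softNorm (hε : 0 < ε) (j k : Fin 3) :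
    pdR j (pdR k (softNorm ε)) = fun x => softNormInv ε x *
      ((if j = k then 1 else 0) - pdR j (softNorm ε) x * pdR k (softNorm ε) x) := by
  ext x
  have h := (hasPartialDeriv_coord j k).mul (hasPartialDeriv_pdR (contDiff_softNormInv hε) j)
  rw [← pdR_softNorm hε k] at h
  rw [h.pdR_eq (contDiff_pdR (contDiff_softNorm hε) k), pdR_softNormInv hε, pdR_softNorm hε k]
  ring

lemma sum_pdR_softNorm_sq (hε : 0 < ε) (x : E3) :
    ∑ k, pdR k (softNorm ε) x ^ 2 = 1 - ε ^ 2 * softNormInv ε x ^ 2 := by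
  simp only [pdR_softNorm hε, mul_pow, ← Finset.sum_mul, sum_coord_sq]
  linear_combination -softNormInv ε x ^ 2 * softNorm_sq ε x
    + (softNorm ε x * softNormInv ε x + 1) * softNorm_mul_softNormInv hε x

lemma sum_pdR_softNorm_sq_le (hε : 0 < ε) (x : E3) : ∑ k, pdR k (softNorm ε) x ^ 2 ≤ 1 := by
  rw [sum_pdR_softNorm_sq hε]
  linarith [mul_nonneg (sq_nonneg ε) (sq_nonneg (softNormInv ε x))]

lemma lapR_softNorm (hε : 0 < ε) :
    lapR (softNorm ε) = fun x => 2 * softNormInv ε x + ε ^ 2 * softNormInv ε x ^ 3 := by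
  ext x
  have h := sum_pdR_softNorm_sq hε x
  simp only [Fin.sum_univ_three] at h
  simp only [lapR, pdR_pdR_softNorm hε, Fin.sum_univ_three, if_true]
  linear_combination -softNormInv ε x * h

lemma pdR_lapR_softNorm (hε : 0 < ε) (j : Fin 3) :
    pdR j (lapR (softNorm ε)) = fun x => -(pdR j (softNorm ε) x
      * (2 * softNormInv ε x ^ 2 + 3 * ε ^ 2 * softNormInv ε x ^ 4)) := by
  ext x
  have hq := hasPartialDeriv_pdR (contDiff_softNormInv hε) j
  have h := (hq.const_mul 2).add ((hq.pow 3).const_mul (ε ^ 2))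
  rw [← lapR_softNorm hε] at h
  rw [h.pdR_eq (contDiff_lapR (contDiff_softNorm hε)), pdR_softNormInv hε]
  push_cast
  ring

lemma pdR_pdR_lapR_softNorm (hε : 0 < ε) (j : Fin 3) :
    pdR j (pdR j (lapR (softNorm ε))) = fun x => pdR j (softNorm ε) x ^ 2
      * (6 * softNormInv ε x ^ 3 + 15 * ε ^ 2 * softNormInv ε x ^ 5)
      - (2 * softNormInv ε x ^ 3 + 3 * ε ^ 2 * softNormInv ε x ^ 5) := by
  ext x
  have hq := hasPartialDeriv_pdR (contDiff_softNormInv hε) j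
  have hn := hasPartialDeriv_pdR (contDiff_pdR (contDiff_softNorm hε) j) j
  have h := (hn.mul (((hq.pow 2).const_mul 2).add ((hq.pow 4).const_mul (3 * ε ^ 2)))).neg
  rw [← pdR_lapR_softNorm hε] at h
  rw [h.pdR_eq (contDiff_pdR (contDiff_lapR (contDiff_softNorm hε)) j), pdR_softNormInv hε,
    pdR_pdR_softNorm hε]
  push_cast
  simp only [if_true]
  ring

lemma lapR_lapR_softNorm (hε : 0 < ε) (x : E3) :
    lapR (lapR (softNorm ε)) x = -(15 * ε ^ 4 * softNormInv ε x ^ 7) := by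
  have h := sum_pdR_softNorm_sq hε x
  simp only [Fin.sum_univ_three] at h
  simp only [lapR.eq_def (lapR _), pdR_pdR_lapR_softNorm hε, Fin.sum_univ_three]
  linear_combination (6 * softNormInv ε x ^ 3 + 15 * ε ^ 2 * softNormInv ε x ^ 5) * h

lemma isMultiplier_softNormInv (hε : 0 < ε) : IsMultiplier (softNormInv ε) :=
  .of_norm_le (contDiff_softNormInv hε).continuous.aestronglyMeasurable fun x => by
    rw [norm_of_nonneg (softNormInv_nonneg ε x)]
    exact inv_anti₀ hε (le_softNorm ε x)

lemma isVirialWeight_softNorm (hε : 0 < ε) : IsVirialWeight (softNorm ε) := by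
  have hw := contDiff_softNorm hε
  have hq := isMultiplier_softNormInv hε
  have hn (k) : IsMultiplier (pdR k (softNorm ε)) :=
    .of_norm_le (contDiff_pdR hw k).continuous.aestronglyMeasurable fun x =>
      (sq_le_one_iff_abs_le_one _).1 ((Finset.single_le_sum
        (f := fun k => pdR k (softNorm ε) x ^ 2) (fun k _ => sq_nonneg _)
        (Finset.mem_univ k)).trans (sum_pdR_softNorm_sq_le hε x))
  refine ⟨hw, hn, fun j k => ?_, fun j => ?_, fun j => ?_⟩
  · rw [pdR_pdR_softNorm hε]; fun_prop
  · rw [pdR_lapR_softNorm hε]; fun_prop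
  · rw [pdR_pdR_lapR_softNorm hε]; fun_prop

lemma pdR_softNorm_neg (hε : 0 < ε) (k : Fin 3) (x : E3) :
    pdR k (softNorm ε) (-x) = -pdR k (softNorm ε) x := by
  simp [pdR_softNorm hε, softNormInv, softNorm]

lemma pdR_pdR_softNorm_neg (hε : 0 < ε) (j k : Fin 3) (x : E3) :
    pdR j (pdR k (softNorm ε)) (-x) = pdR j (pdR k (softNorm ε)) x := by
  simp [pdR_pdR_softNorm hε, pdR_softNorm_neg hε, softNormInv, softNorm]

lemma abs_sum_pdR_softNorm_mul_le (hε : 0 < ε) (x : E3) (z : Fin 3 → ℝ) :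
    |∑ k, pdR k (softNorm ε) x * z k| ≤ √(∑ k, z k ^ 2) := by
  refine abs_le_sqrt ((Finset.sum_mul_sq_le_sq_mul_sq _ _ _).trans ?_)
  exact mul_le_of_le_one_left (by positivity) (sum_pdR_softNorm_sq_le hε x)

lemma sub_le_sum_pdR_softNorm_mul_coord (hε : 0 < ε) (x : E3) :
    ‖x‖ - ε ≤ ∑ k, pdR k (softNorm ε) x * x k := by
  have h : ∑ k, pdR k (softNorm ε) x * x k = ‖x‖ ^ 2 / softNorm ε x := by
    simp only [pdR_softNorm hε, ← sum_coord_sq, softNormInv, Finset.sum_div]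
    exact Finset.sum_congr rfl fun k _ => by ring
  rw [h, le_div_iff₀ (softNorm_pos hε x)]
  nlinarith [softNorm_le hε x, norm_le_softNorm ε x, norm_nonneg x]

/-- The distance function is convex, hence so is its regularization. -/
lemma sum_pdR_pdR_softNorm_mul_inner_nonneg {V : Type*} [NormedAddCommGroup V]
    [InnerProductSpace ℝ V] (hε : 0 < ε) (x : E3) (F : Fin 3 → V) :
    0 ≤ ∑ j, ∑ k, pdR j (pdR k (softNorm ε)) x * ⟪F j, F k⟫_ℝ := by
  set n := fun k => pdR k (softNorm ε) x
  have hF : ‖∑ k, n k • F k‖ ^ 2 ≤ ∑ k, ‖F k‖ ^ 2 := calc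
    ‖∑ k, n k • F k‖ ^ 2 ≤ (∑ k, |n k| * ‖F k‖) ^ 2 := by
      gcongr
      exact norm_sum_le_of_le _ fun k _ => by rw [norm_smul, norm_eq_abs]
    _ ≤ (∑ k, |n k| ^ 2) * ∑ k, ‖F k‖ ^ 2 := Finset.sum_mul_sq_le_sq_mul_sq _ _ _
    _ ≤ ∑ k, ‖F k‖ ^ 2 := by
      simp only [sq_abs]
      exact mul_le_of_le_one_left (by positivity) (sum_pdR_softNorm_sq_le hε x)
  have hsq : ‖∑ k, n k • F k‖ ^ 2 = ∑ j, ∑ k, n j * n k * ⟪F j, F k⟫_ℝ := by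
    rw [← real_inner_self_eq_norm_sq, sum_inner]
    simp only [inner_sum, real_inner_smul_left, real_inner_smul_right, ← mul_assoc]
    exact Finset.sum_congr rfl fun j _ => Finset.sum_congr rfl fun k _ => by ring
  have h : ∑ j, ∑ k, pdR j (pdR k (softNorm ε)) x * ⟪F j, F k⟫_ℝ
      = softNormInv ε x * (∑ k, ‖F k‖ ^ 2 - ‖∑ k, n k • F k‖ ^ 2) := by
    rw [hsq]
    simp only [← real_inner_self_eq_norm_sq, pdR_pdR_softNorm hε, mul_assoc, ← Finset.mul_sum,
      sub_mul, Finset.sum_sub_distrib, ite_mul, one_mul, zero_mul, Finset.sum_ite_eq,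
      Finset.mem_univ, if_true, n]
  exact h ▸ mul_nonneg (softNormInv_nonneg ε x) (sub_nonneg.2 hF)

end SoftNorm

section Interaction

lemma integrable_interaction {f g K : E3 → ℝ} (hf : Decays f) (hg : Decays g)
    (hK : IsMultiplier K) :
    Integrable fun z : E3 × E3 => f z.2 * (K (z.1 - z.2) * g z.1) := by
  obtain ⟨C, hC⟩ := hK.exists_bound
  have hK' := hK.1.comp_quasiMeasurePreserving
    (quasiMeasurePreserving_sub_of_right_invariant volume volume)
  refine ((hg.integrable.mul_prod hf.integrable).bdd_mul hK' (c := C)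
    (.of_forall fun z => hC _)).congr (.of_forall fun z => ?_)
  simp only [Function.comp_apply]
  ring

lemma integrable_interaction_sum {ι : Type*} [Fintype ι] {f : E3 → ℝ} {g K : ι → E3 → ℝ}
    (hf : Decays f) (hg : ∀ i, Decays (g i)) (hK : ∀ i, IsMultiplier (K i)) :
    Integrable fun z : E3 × E3 => f z.2 * ∑ i, K i (z.1 - z.2) * g i z.1 := by
  simp only [Finset.mul_sum]
  exact integrable_finsetSum _ fun i _ => integrable_interaction hf (hg i) (hK i)

lemma integral_nonneg_of_add_swap_nonneg {f : E3 × E3 → ℝ} (hf : Integrable f)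
    (h : ∀ z, 0 ≤ f z + f z.swap) : 0 ≤ ∫ z, f z := by
  have hswap : ∫ z : E3 × E3, f z.swap = ∫ z, f z :=
    integral_prod_swap (μ := volume) (ν := volume) f
  have hf' : Integrable fun z : E3 × E3 => f z.swap := hf.swap
  have hsum : 0 ≤ ∫ z, (f z + f z.swap) := integral_nonneg h
  rw [integral_add hf hf', hswap] at hsum
  linarith

lemma integral_interaction_mono {f : E3 → ℝ} (hf : ∀ y, 0 ≤ f y) {Φ Ψ : E3 × E3 → ℝ}
    (hΦ : Integrable fun z : E3 × E3 => f z.2 * Φ z)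
    (hΨ : Integrable fun z : E3 × E3 => f z.2 * Ψ z)
    (h : ∀ y, ∫ x, Φ (x, y) ≤ ∫ x, Ψ (x, y)) :
    ∫ z : E3 × E3, f z.2 * Φ z ≤ ∫ z : E3 × E3, f z.2 * Ψ z := by
  rw [Measure.volume_eq_prod] at *
  rw [integral_prod_symm _ hΦ, integral_prod_symm _ hΨ]
  refine integral_mono hΦ.integral_prod_right hΨ.integral_prod_right fun y => ?_
  simp only [integral_const_mul]
  exact mul_le_mul_of_nonneg_left (h y) (hf y)

/-- The density of the interaction of the stress at `x` with the mass at `y`, minus the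
interaction of the momenta, contracted with the Hessian of the weight. -/
def interactionStress (ε : ℝ) (u : E3 → ℂ) (x y : E3) : ℝ :=
  ∑ j, ∑ k, pdR j (pdR k (softNorm ε)) (x - y)
    * (‖u y‖ ^ 2 * ⟪pd j u x, pd k u x⟫_ℝ - momentum u j y * momentum u k x)

lemma inner_add_inner_interaction (z z' A A' B B' : ℂ) :
    ⟪starRingEnd ℂ z' * A + z * starRingEnd ℂ B, starRingEnd ℂ z' * A' + z * starRingEnd ℂ B'⟫_ℝ
        + ⟪z' * A - z * B, z' * A' - z * B'⟫_ℝ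
      = 2 * ((‖z'‖ ^ 2 * ⟪A, A'⟫_ℝ - ⟪Complex.I * z', B⟫_ℝ * ⟪Complex.I * z, A'⟫_ℝ)
        + (‖z‖ ^ 2 * ⟪B, B'⟫_ℝ - ⟪Complex.I * z, A⟫_ℝ * ⟪Complex.I * z', B'⟫_ℝ)) := by
  simp only [Complex.inner, map_add, map_mul, map_sub, Complex.add_re, Complex.add_im,
    Complex.sub_re, Complex.sub_im, Complex.mul_re, Complex.mul_im, Complex.conj_re,
    Complex.conj_im, Complex.I_re, Complex.I_im, ← Complex.normSq_eq_norm_sq,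
    Complex.normSq_apply]
  ring

variable {ε : ℝ} {u v : E3 → ℂ}

/-- The symmetrized stress is the Hessian of the weight evaluated on the vectors
`(∇ₓ + ∇_y) (ū(y) u(x))` and `(∇ₓ - ∇_y) (u(y) u(x))`. -/
lemma interactionStress_add_swap_nonneg (hε : 0 < ε) (u : E3 → ℂ) (x y : E3) :
    0 ≤ interactionStress ε u x y + interactionStress ε u y x := by
  have hF := sum_pdR_pdR_softNorm_mul_inner_nonneg hε (x - y) fun j =>
    starRingEnd ℂ (u y) * pd j u x + u x * starRingEnd ℂ (pd j u y)
  have hG := sum_pdR_pdR_softNorm_mul_inner_nonneg hε (x - y) fun j =>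
    u y * pd j u x - u x * pd j u y
  have hadd := add_nonneg hF hG
  simp only [← Finset.sum_add_distrib, ← mul_add, inner_add_inner_interaction] at hadd
  simp only [interactionStress, ← neg_sub x y, pdR_pdR_softNorm_neg hε, momentum,
    ← Finset.sum_add_distrib, ← mul_add]
  simpa only [mul_left_comm _ (2 : ℝ), ← Finset.mul_sum, Nat.ofNat_pos, mul_nonneg_iff_of_pos_left]
    using hadd

lemma IsDecayingState.decays_momentum (hu : IsDecayingState u) (k : Fin 3) :
    Decays (momentum u k) :=
  (hu.decays.const_mul Complex.I).inner_isMultiplier (hu.decays_pd k).isMultiplier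

lemma IsDecayingState.decays_norm_sq (hu : IsDecayingState u) : Decays fun x => ‖u x‖ ^ 2 :=
  hu.decays.norm.pow 2

lemma integrable_interactionStress (hε : 0 < ε) (hu : IsDecayingState u) :
    Integrable fun z : E3 × E3 => interactionStress ε u z.1 z.2 := by
  have hw := (isVirialWeight_softNorm hε).hess
  refine integrable_finsetSum _ fun j _ => integrable_finsetSum _ fun k _ => ?_
  refine ((integrable_interaction hu.decays_norm_sq ((hu.decays_pd j).inner_isMultiplier
    (hu.decays_pd k).isMultiplier) (hw j k)).sub (integrable_interaction (hu.decays_momentum j)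
      (hu.decays_momentum k) (hw j k))).congr (.of_forall fun z => ?_)
  simp only [Pi.sub_apply]
  ring

lemma integral_interactionStress_nonneg (hε : 0 < ε) (hu : IsDecayingState u) :
    0 ≤ ∫ z : E3 × E3, interactionStress ε u z.1 z.2 :=
  integral_nonneg_of_add_swap_nonneg (integrable_interactionStress hε hu) fun z =>
    interactionStress_add_swap_nonneg hε u z.1 z.2

end Interaction

section Monotonicity

variable {a b lam ε : ℝ} {u v : E3 → ℂ}

/-- The Morawetz action `∫ ∇w · p` of the momentum density `p`, with `w = softNorm ε`. -/
def morawetzAction (ε : ℝ) (u : E3 → ℂ) : ℝ :=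
  ∫ x, ∑ k, pdR k (softNorm ε) x * momentum u k x

/-- The time derivative of `morawetzAction ε u` when `v` is the time derivative of `u`. -/
def morawetzActionDt (ε : ℝ) (u v : E3 → ℂ) : ℝ :=
  ∫ x, ∑ k, pdR k (softNorm ε) x * momentumDt u v k x

/-- The interaction Morawetz action `∬ |u(y)|² ∇w(x - y) · p(x)`, with `w = softNorm ε`. -/
def interactionAction (ε : ℝ) (u : E3 → ℂ) : ℝ :=
  ∫ z : E3 × E3, ‖u z.2‖ ^ 2 * ∑ k, pdR k (softNorm ε) (z.1 - z.2) * momentum u k z.1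

/-- The time derivative of `interactionAction ε u` when `v` is the time derivative of `u`. -/
def interactionActionDt (ε : ℝ) (u v : E3 → ℂ) : ℝ :=
  ∫ z : E3 × E3, (2 * ⟪u z.2, v z.2⟫_ℝ
      * ∑ k, pdR k (softNorm ε) (z.1 - z.2) * momentum u k z.1
    + ‖u z.2‖ ^ 2 * ∑ k, pdR k (softNorm ε) (z.1 - z.2) * momentumDt u v k z.1)

/-- The kernel `ε⁴ (|x|² + ε²)^(-7/2)`, which is `-Δ² (softNorm ε) / 15` and an approximate
identity up to normalization. -/
def bilaplacianKernel (ε : ℝ) (x : E3) : ℝ := ε ^ 4 * softNormInv ε x ^ 7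

lemma bilaplacianKernel_nonneg (ε : ℝ) (x : E3) : 0 ≤ bilaplacianKernel ε x :=
  mul_nonneg (by positivity) (pow_nonneg (softNormInv_nonneg ε x) 7)

lemma isMultiplier_bilaplacianKernel (hε : 0 < ε) : IsMultiplier (bilaplacianKernel ε) :=
  (isMultiplier_const _).mul ((isMultiplier_softNormInv hε).pow 7)

lemma radialForce_nonneg (ha : 0 ≤ a) (hb : 0 ≤ b) (hlam : 0 ≤ lam) (u : E3 → ℂ) (x : E3) :
    0 ≤ radialForce a b lam u x := by
  unfold radialForce; positivity

lemma integrable_hess_mul_momentum (hε : 0 < ε) (hu : IsDecayingState u) :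
    Integrable fun z : E3 × E3 => ∑ j, ∑ k, pdR j (pdR k (softNorm ε)) (z.1 - z.2)
      * (momentum u j z.2 * momentum u k z.1) := by
  refine integrable_finsetSum _ fun j _ => integrable_finsetSum _ fun k _ => ?_
  simpa only [mul_left_comm] using integrable_interaction (hu.decays_momentum j)
    (hu.decays_momentum k) ((isVirialWeight_softNorm hε).hess j k)

namespace IsSlice

lemma decays_momentumDt (h : IsSlice a b lam u v) (k : Fin 3) : Decays (momentumDt u v k) :=
  ((h.decays_dt.const_mul Complex.I).inner_isMultiplier (h.state.decays_pd k).isMultiplier).add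
    ((h.state.decays.const_mul Complex.I).inner_isMultiplier (h.decays_pd_dt k).isMultiplier)

lemma integral_inner_dt_mul_gradient (h : IsSlice a b lam u v) {w : E3 → ℝ}
    (hw : IsVirialWeight w) (c : Fin 3 → ℝ) :
    ∫ y, ⟪u y, v y⟫_ℝ * ∑ k, pdR k w y * c k
      = ∫ y, ∑ j, ∑ k, pdR j (pdR k w) y * (momentum u j y * c k) := by
  have hf : ContDiff ℝ ∞ fun y => ∑ k, pdR k w y * c k :=
    ContDiff.sum fun k _ => (contDiff_pdR hw.contDiff k).mul contDiff_const
  have hgrad (j : Fin 3) : HasPartialDeriv j (fun y => ∑ k, pdR k w y * c k)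
      fun y => ∑ k, pdR j (pdR k w) y * c k := .sum fun k => by
    simpa only [mul_comm (c k)] using
      (hasPartialDeriv_pdR (contDiff_pdR hw.contDiff k) j).const_mul (c k)
  have hpdR (j : Fin 3) := funext ((hgrad j).pdR_eq hf)
  rw [h.integral_inner_dt_mul hf (.sum fun k => (hw.grad k).mul (isMultiplier_const _))]
  · simp only [hpdR, Finset.mul_sum, mul_left_comm]
  · intro j
    rw [hpdR j]
    exact .sum fun k => (hw.hess j k).mul (isMultiplier_const _)

lemma integral_inner_dt_mul_softNorm (h : IsSlice a b lam u v) (hε : 0 < ε) (x : E3)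
    (c : Fin 3 → ℝ) :
    ∫ y, ⟪u y, v y⟫_ℝ * ∑ k, pdR k (softNorm ε) (x - y) * c k
      = ∫ y, -∑ j, ∑ k, pdR j (pdR k (softNorm ε)) (x - y) * (momentum u j y * c k) := by
  have hkey := h.integral_inner_dt_mul_gradient ((isVirialWeight_softNorm hε).comp_sub_right x) c
  have hn (y : E3) (k : Fin 3) := pdR_softNorm_neg hε k (x - y)
  have hw (y : E3) (j k : Fin 3) := pdR_pdR_softNorm_neg hε j k (x - y)
  simp only [neg_sub] at hn hw
  simp only [pdR_comp_sub_right] at hkey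
  simp only [hn, hw, neg_mul, Finset.sum_neg_distrib, mul_neg,
    integral_neg] at hkey ⊢
  exact neg_eq_iff_eq_neg.1 hkey

lemma integral_inner_dt_mul_momentum (h : IsSlice a b lam u v) (hε : 0 < ε) :
    ∫ z : E3 × E3, ⟪u z.2, v z.2⟫_ℝ * ∑ k, pdR k (softNorm ε) (z.1 - z.2) * momentum u k z.1
      = -∫ z : E3 × E3, ∑ j, ∑ k, pdR j (pdR k (softNorm ε)) (z.1 - z.2)
          * (momentum u j z.2 * momentum u k z.1) := by
  obtain ⟨-, hw₁, -⟩ := isVirialWeight_softNorm hε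
  have hp := h.state.decays_momentum
  have hleft := integrable_interaction_sum
    (h.state.decays.inner_isMultiplier h.decays_dt.isMultiplier) hp hw₁
  have hright := integrable_hess_mul_momentum hε h.state
  rw [Measure.volume_eq_prod] at *
  rw [integral_prod _ hleft, integral_prod _ hright, ← integral_neg]
  refine integral_congr_ae (.of_forall fun x => ?_)
  simp only [h.integral_inner_dt_mul_softNorm hε, integral_neg]

lemma integrable_stress_add_mass (h : IsSlice a b lam u v) (hε : 0 < ε) (y : E3) :
    Integrable fun x =>
      2 * ∑ j, ∑ k, pdR j (pdR k (softNorm ε)) (x - y) * ⟪pd j u x, pd k u x⟫_ℝ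
        + 15 / 2 * (bilaplacianKernel ε (x - y) * ‖u x‖ ^ 2) := by
  have hK := (isMultiplier_bilaplacianKernel hε).comp_sub_right y
  have hw (j k) := ((isVirialWeight_softNorm hε).hess j k).comp_sub_right y
  have hu := h.state.decays_norm_sq
  have hu₁ := h.state.decays_pd
  exact Decays.integrable (by fun_prop)

/-- Testing the momentum equation against the translate `softNorm ε (· - y)` of the weight. -/
lemma le_integral_momentumDt (h : IsSlice a b lam u v) (ha : 0 < a) (hlam : 0 ≤ lam)
    (hε : 0 < ε) (y : E3) {g : E3 → ℝ} (hg : Integrable g)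
    (hle : ∀ x, g x ≤ (∑ k, pdR k (softNorm ε) (x - y) * x k) * radialForce a b lam u x) :
    ∫ x, (2 * ∑ j, ∑ k, pdR j (pdR k (softNorm ε)) (x - y) * ⟪pd j u x, pd k u x⟫_ℝ
        + 15 / 2 * (bilaplacianKernel ε (x - y) * ‖u x‖ ^ 2) + g x)
      ≤ ∫ x, ∑ k, pdR k (softNorm ε) (x - y) * momentumDt u v k x := by
  have hw := isVirialWeight_softNorm hε
  have hw₁ (k) := (hw.grad k).comp_sub_right y
  have hw₂ (j k) := (hw.hess j k).comp_sub_right y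
  have hΔw := hw.lapR.comp_sub_right y
  have hΔΔw := hw.lapR_lapR.comp_sub_right y
  have hu := h.state.decays_norm_sq
  have hu₁ := h.state.decays_pd
  have hxκ := h.decays_coord_mul_radialForce ha hlam
  have hpow := h.decays_power ha hlam
  have hforce : Decays fun x => ∑ k, pdR k (softNorm ε) (x - y) * (x k * radialForce a b lam u x)
      + lapR (softNorm ε) (x - y) * (lam / 2 * ‖x‖ ^ (-b) * ‖u x‖ ^ 4) :=
    .add (.sum fun k => (hw₁ k).mul_decays (hxκ k)) (hΔw.mul_decays hpow)
  have hstress : Decays fun x => 2⁻¹ * (lapR (lapR (softNorm ε)) (x - y) * ‖u x‖ ^ 2)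
      - 2 * ∑ j, ∑ k, pdR j (pdR k (softNorm ε)) (x - y) * ⟪pd j u x, pd k u x⟫_ℝ := by
    fun_prop
  have hkey := h.integral_gradient_mul_momentumDt_eq ha hlam (hw.comp_sub_right y)
  simp only [pdR_comp_sub_right, lapR_comp_sub_right] at hkey
  rw [hkey, ← integral_sub hforce.integrable hstress.integrable]
  refine integral_mono ((h.integrable_stress_add_mass hε y).add hg)
    (hforce.integrable.sub hstress.integrable) fun x => ?_
  have hlapR : 0 ≤ lapR (softNorm ε) (x - y) := by
    have := softNormInv_nonneg ε (x - y)
    rw [lapR_softNorm hε]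
    positivity
  have hpower_nonneg : 0 ≤ lapR (softNorm ε) (x - y) * (lam / 2 * ‖x‖ ^ (-b) * ‖u x‖ ^ 4) := by
    positivity
  simp only [bilaplacianKernel, lapR_lapR_softNorm hε, ← mul_assoc, ← Finset.sum_mul] at hle ⊢
  linarith [hle x]

lemma sub_le_morawetzActionDt (h : IsSlice a b lam u v) (ha : 0 < a) (hb : 0 ≤ b)
    (hlam : 0 ≤ lam) (hε : 0 < ε) :
    (∫ x, ‖x‖ * radialForce a b lam u x) - ε * ∫ x, radialForce a b lam u x
      ≤ morawetzActionDt ε u v := by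
  have hκ := (h.decays_radialForce ha hlam).integrable
  have hnκ := (h.decays_norm_mul_radialForce ha hlam).integrable
  have hg := hnκ.sub (hκ.const_mul ε)
  have hkey := h.le_integral_momentumDt ha hlam hε 0 hg fun x => by
    rw [sub_zero, Pi.sub_apply, ← sub_mul]
    exact mul_le_mul_of_nonneg_right (sub_le_sum_pdR_softNorm_mul_coord hε x)
      (radialForce_nonneg ha.le hb hlam u x)
  simp only [sub_zero] at hkey
  rw [← integral_const_mul, ← integral_sub hnκ (hκ.const_mul ε)]
  refine (integral_mono hg ?_ fun x => ?_).trans hkey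
  · have hint := h.integrable_stress_add_mass hε 0
    simp only [sub_zero] at hint
    exact hint.add hg
  · have hstress := sum_pdR_pdR_softNorm_mul_inner_nonneg hε x fun j => pd j u x
    have hkernel := bilaplacianKernel_nonneg ε x
    refine le_add_of_nonneg_left ?_
    positivity

lemma integrable_norm_sq_mul_radialForce (h : IsSlice a b lam u v) (ha : 0 < a)
    (hlam : 0 ≤ lam) :
    Integrable fun z : E3 × E3 => ‖u z.2‖ ^ 2 * (‖z.1‖ * radialForce a b lam u z.1) := by
  refine ((h.decays_norm_mul_radialForce ha hlam).integrable.mul_prod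
    h.state.decays_norm_sq.integrable).congr (.of_forall fun z => ?_)
  simp only [mul_comm]

lemma interactionDensity_eq (a b lam ε : ℝ) (u : E3 → ℂ) (z : E3 × E3) :
    2 * (interactionStress ε u z.1 z.2
          + ∑ j, ∑ k, pdR j (pdR k (softNorm ε)) (z.1 - z.2)
            * (momentum u j z.2 * momentum u k z.1))
        + 15 / 2 * (‖u z.2‖ ^ 2 * (bilaplacianKernel ε (z.1 - z.2) * ‖u z.1‖ ^ 2))
        - ‖u z.2‖ ^ 2 * (‖z.1‖ * radialForce a b lam u z.1)
      = ‖u z.2‖ ^ 2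
        * (2 * ∑ j, ∑ k, pdR j (pdR k (softNorm ε)) (z.1 - z.2) * ⟪pd j u z.1, pd k u z.1⟫_ℝ
          + 15 / 2 * (bilaplacianKernel ε (z.1 - z.2) * ‖u z.1‖ ^ 2)
          - ‖z.1‖ * radialForce a b lam u z.1) := by
  simp only [interactionStress, mul_sub, Finset.sum_sub_distrib, sub_add_cancel,
    mul_left_comm _ (‖u z.2‖ ^ 2), ← Finset.mul_sum]
  ring

lemma integral_interactionDensity_le (h : IsSlice a b lam u v) (ha : 0 < a) (hb : 0 ≤ b)
    (hlam : 0 ≤ lam) (hε : 0 < ε) :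
    ∫ z : E3 × E3, (2 * (interactionStress ε u z.1 z.2
          + ∑ j, ∑ k, pdR j (pdR k (softNorm ε)) (z.1 - z.2)
            * (momentum u j z.2 * momentum u k z.1))
        + 15 / 2 * (‖u z.2‖ ^ 2 * (bilaplacianKernel ε (z.1 - z.2) * ‖u z.1‖ ^ 2))
        - ‖u z.2‖ ^ 2 * (‖z.1‖ * radialForce a b lam u z.1))
      ≤ ∫ z : E3 × E3, ‖u z.2‖ ^ 2
          * ∑ k, pdR k (softNorm ε) (z.1 - z.2) * momentumDt u v k z.1 := by
  have hstress := integrable_interactionStress hε h.state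
  have hp := integrable_hess_mul_momentum hε h.state
  have hQ := integrable_interaction h.state.decays_norm_sq h.state.decays_norm_sq
    (isMultiplier_bilaplacianKernel hε)
  have hF := h.integrable_norm_sq_mul_radialForce ha hlam
  have hint := (((hstress.fun_add hp).const_mul 2).fun_add (hQ.const_mul (15 / 2))).sub hF
  simp only [interactionDensity_eq]
  refine integral_interaction_mono (fun y => sq_nonneg ‖u y‖) ?_ ?_ fun y => ?_
  · exact hint.congr (.of_forall (interactionDensity_eq a b lam ε u))
  · exact integrable_interaction_sum h.state.decays_norm_sq h.decays_momentumDt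
      (isVirialWeight_softNorm hε).grad
  · simp only [sub_eq_add_neg]
    refine h.le_integral_momentumDt ha hlam hε y
      (h.decays_norm_mul_radialForce ha hlam).integrable.neg fun x => ?_
    have habs := abs_sum_pdR_softNorm_mul_le hε (x - y) x
    rw [sum_coord_sq, sqrt_sq (norm_nonneg x)] at habs
    rw [← neg_mul]
    exact mul_le_mul_of_nonneg_right (neg_le_of_abs_le habs)
      (radialForce_nonneg ha.le hb hlam u x)

lemma sub_le_interactionActionDt (h : IsSlice a b lam u v) (ha : 0 < a) (hb : 0 ≤ b)
    (hlam : 0 ≤ lam) (hε : 0 < ε) :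
    15 / 2 * (∫ z : E3 × E3, ‖u z.2‖ ^ 2 * (bilaplacianKernel ε (z.1 - z.2) * ‖u z.1‖ ^ 2))
        - (∫ y, ‖u y‖ ^ 2) * ∫ x, ‖x‖ * radialForce a b lam u x
      ≤ interactionActionDt ε u v := by
  have hw := (isVirialWeight_softNorm hε).grad
  have hstress := integrable_interactionStress hε h.state
  have hp := integrable_hess_mul_momentum hε h.state
  have hQ := integrable_interaction h.state.decays_norm_sq h.state.decays_norm_sq
    (isMultiplier_bilaplacianKernel hε)
  have hF := h.integrable_norm_sq_mul_radialForce ha hlam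
  have hmass := integrable_interaction_sum
    (h.state.decays.inner_isMultiplier h.decays_dt.isMultiplier) h.state.decays_momentum hw
  have hmomentum := integrable_interaction_sum h.state.decays_norm_sq h.decays_momentumDt hw
  have hF_eq : ∫ z : E3 × E3, ‖u z.2‖ ^ 2 * (‖z.1‖ * radialForce a b lam u z.1)
      = (∫ y, ‖u y‖ ^ 2) * ∫ x, ‖x‖ * radialForce a b lam u x := by
    rw [mul_comm, ← integral_prod_mul, Measure.volume_eq_prod]
    simp only [mul_comm]
  have hDt : interactionActionDt ε u v
      = 2 * (∫ z : E3 × E3,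
          ⟪u z.2, v z.2⟫_ℝ * ∑ k, pdR k (softNorm ε) (z.1 - z.2) * momentum u k z.1)
        + ∫ z : E3 × E3, ‖u z.2‖ ^ 2
          * ∑ k, pdR k (softNorm ε) (z.1 - z.2) * momentumDt u v k z.1 := by
    rw [← integral_const_mul, ← integral_add (hmass.const_mul 2) hmomentum]
    simp only [interactionActionDt, mul_assoc]
  have hkey := h.integral_interactionDensity_le ha hb hlam hε
  rw [integral_sub (((hstress.fun_add hp).const_mul 2).fun_add (hQ.const_mul (15 / 2))) hF,
    integral_add ((hstress.fun_add hp).const_mul 2) (hQ.const_mul (15 / 2)), integral_const_mul,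
    integral_add hstress hp, integral_const_mul, hF_eq] at hkey
  rw [hDt, h.integral_inner_dt_mul_momentum hε]
  linarith [integral_interactionStress_nonneg hε h.state]

end IsSlice

end Monotonicity

section ApproximateIdentity

variable {ε : ℝ}

lemma bilaplacianKernel_eq (hε : 0 < ε) (x : E3) :
    bilaplacianKernel ε x = (ε ^ 3)⁻¹ * bilaplacianKernel 1 (ε⁻¹ • x) := by
  have hscale : softNorm ε x = ε * softNorm 1 (ε⁻¹ • x) := by
    rw [softNorm, softNorm, ← sqrt_sq hε.le, ← sqrt_mul (sq_nonneg ε), sqrt_sq hε.le, norm_smul,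
      norm_inv, norm_of_nonneg hε.le]
    congr 1
    field_simp
  rw [bilaplacianKernel, bilaplacianKernel, softNormInv, softNormInv, hscale]
  field_simp

lemma softNormInv_one_pow_four_le (x : E3) : softNormInv 1 x ^ 4 ≤ 16 * decay x := by
  have hle : softNormInv 1 x ≤ 2 * (1 + ‖x‖)⁻¹ := by
    rw [softNormInv, ← div_eq_mul_inv, inv_le_comm₀ (softNorm_pos one_pos x) (by positivity),
      inv_div]
    linarith [le_softNorm 1 x, norm_le_softNorm 1 x]
  calc softNormInv 1 x ^ 4 ≤ (2 * (1 + ‖x‖)⁻¹) ^ 4 :=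
        pow_le_pow_left₀ (softNormInv_nonneg 1 x) hle 4
    _ = 16 * decay x := by
        rw [decay, rpow_neg (by positivity), mul_pow, inv_pow]
        norm_num

lemma decays_softNormInv_one_pow_four : Decays fun x => softNormInv 1 x ^ 4 := by
  refine .of_norm_le (C := 16) ((isMultiplier_softNormInv one_pos).pow 4).1 fun x => ?_
  rw [norm_of_nonneg (pow_nonneg (softNormInv_nonneg 1 x) 4)]
  exact softNormInv_one_pow_four_le x

lemma integrable_bilaplacianKernel_one : Integrable (bilaplacianKernel 1) := by
  refine (decays_softNormInv_one_pow_four.mul_isMultiplier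
    ((isMultiplier_softNormInv one_pos).pow 3)).integrable.congr (.of_forall fun x => ?_)
  rw [bilaplacianKernel]
  ring

lemma isMultiplier_softNormInv_one_mul_norm : IsMultiplier fun x => softNormInv 1 x * ‖x‖ := by
  refine .of_norm_le (C := 1) ((isMultiplier_softNormInv one_pos).1.mul
    continuous_norm.aestronglyMeasurable) fun x => ?_
  have hq := softNormInv_nonneg 1 x
  rw [norm_of_nonneg (by positivity), mul_comm]
  exact (mul_le_mul_of_nonneg_right (norm_le_softNorm 1 x) hq).trans_eq
    (softNorm_mul_softNormInv one_pos x)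

lemma integrable_bilaplacianKernel_one_mul_norm :
    Integrable fun x => bilaplacianKernel 1 x * ‖x‖ := by
  refine (decays_softNormInv_one_pow_four.mul_isMultiplier
    (((isMultiplier_softNormInv one_pos).pow 2).mul
      isMultiplier_softNormInv_one_mul_norm)).integrable.congr (.of_forall fun x => ?_)
  simp only [bilaplacianKernel]
  ring

/-- The total mass of the kernels `bilaplacianKernel ε`, which does not depend on `ε`. -/
def kernelMass : ℝ := ∫ x, bilaplacianKernel 1 x

/-- The first absolute moment of `bilaplacianKernel 1`. -/
def kernelMoment : ℝ := ∫ x, bilaplacianKernel 1 x * ‖x‖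

lemma kernelMass_pos : 0 < kernelMass := by
  have hpos (x : E3) : 0 < bilaplacianKernel 1 x :=
    mul_pos (by positivity) (pow_pos (inv_pos.2 (softNorm_pos one_pos x)) 7)
  rw [kernelMass, integral_pos_iff_support_of_nonneg (fun x => (hpos x).le)
    integrable_bilaplacianKernel_one, Function.support_eq_univ fun x => (hpos x).ne']
  exact Measure.measure_univ_pos.2 (NeZero.ne _)

lemma integrable_bilaplacianKernel_mul_norm_sub (hε : 0 < ε) (y : E3) :
    Integrable fun x => bilaplacianKernel ε (x - y) * ‖x - y‖ := by
  have hscaled := integrable_bilaplacianKernel_one_mul_norm.comp_smul (inv_ne_zero hε.ne')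
  refine (((hscaled.const_mul (ε * (ε ^ 3)⁻¹))).comp_sub_right y).congr (.of_forall fun x => ?_)
  simp only [bilaplacianKernel_eq hε, norm_smul, norm_inv, norm_of_nonneg hε.le]
  field_simp

lemma integrable_bilaplacianKernel_sub (hε : 0 < ε) (y : E3) :
    Integrable fun x => bilaplacianKernel ε (x - y) := by
  simp only [bilaplacianKernel_eq hε]
  exact ((integrable_bilaplacianKernel_one.comp_smul (inv_ne_zero hε.ne')).const_mul
    (ε ^ 3)⁻¹).comp_sub_right y

lemma integral_bilaplacianKernel_sub (hε : 0 < ε) (y : E3) :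
    ∫ x, bilaplacianKernel ε (x - y) = kernelMass := by
  rw [integral_sub_right_eq_self (bilaplacianKernel ε)]
  simp only [bilaplacianKernel_eq hε, integral_const_mul,
    Measure.integral_comp_inv_smul_of_nonneg volume (bilaplacianKernel 1) hε.le,
    finrank_euclideanSpace, Fintype.card_fin, smul_eq_mul, kernelMass]
  field_simp

lemma integral_bilaplacianKernel_mul_norm_sub (hε : 0 < ε) (y : E3) :
    ∫ x, bilaplacianKernel ε (x - y) * ‖x - y‖ = ε * kernelMoment := by
  rw [integral_sub_right_eq_self fun x => bilaplacianKernel ε x * ‖x‖]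
  have hscale (x : E3) : bilaplacianKernel ε x * ‖x‖
      = ε * (ε ^ 3)⁻¹ * (bilaplacianKernel 1 (ε⁻¹ • x) * ‖ε⁻¹ • x‖) := by
    rw [bilaplacianKernel_eq hε, norm_smul, norm_inv, norm_of_nonneg hε.le]
    field_simp
  simp only [hscale, integral_const_mul, Measure.integral_comp_inv_smul_of_nonneg volume
    (fun x : E3 => bilaplacianKernel 1 x * ‖x‖) hε.le, finrank_euclideanSpace, Fintype.card_fin,
    smul_eq_mul, kernelMoment]
  field_simp

lemma sub_le_integral_bilaplacianKernel_mul {ρ : E3 → ℝ} (hρ : Decays ρ) {L : ℝ}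
    (hL : ∀ x y, |ρ x - ρ y| ≤ L * ‖x - y‖) (hε : 0 < ε) (y : E3) :
    kernelMass * ρ y - ε * (L * kernelMoment) ≤ ∫ x, bilaplacianKernel ε (x - y) * ρ x := by
  have hK := (integrable_bilaplacianKernel_sub hε y).mul_const (ρ y)
  have hKn := (integrable_bilaplacianKernel_mul_norm_sub hε y).const_mul L
  calc kernelMass * ρ y - ε * (L * kernelMoment)
      = ∫ x, (bilaplacianKernel ε (x - y) * ρ y
          - L * (bilaplacianKernel ε (x - y) * ‖x - y‖)) := by
        rw [integral_sub hK hKn, integral_mul_const, integral_const_mul,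
          integral_bilaplacianKernel_sub hε, integral_bilaplacianKernel_mul_norm_sub hε]
        ring
    _ ≤ ∫ x, bilaplacianKernel ε (x - y) * ρ x := by
        refine integral_mono (hK.sub hKn) (((isMultiplier_bilaplacianKernel
          hε).comp_sub_right y).mul_decays hρ).integrable fun x => ?_
        have hLip := neg_le_of_abs_le (hL x y)
        have hnonneg := bilaplacianKernel_nonneg ε (x - y)
        rw [mul_left_comm, ← mul_sub]
        gcongr
        linarith

lemma sub_le_integral_interaction_bilaplacianKernel {ρ : E3 → ℝ} (hρ : Decays ρ)
    (hρ₀ : ∀ x, 0 ≤ ρ x) {L : ℝ} (hL : ∀ x y, |ρ x - ρ y| ≤ L * ‖x - y‖) (hε : 0 < ε) :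
    kernelMass * (∫ x, ρ x ^ 2) - ε * (L * kernelMoment * ∫ x, ρ x)
      ≤ ∫ z : E3 × E3, ρ z.2 * (bilaplacianKernel ε (z.1 - z.2) * ρ z.1) := by
  have hint := integrable_interaction hρ hρ (isMultiplier_bilaplacianKernel hε)
  rw [Measure.volume_eq_prod] at *
  rw [integral_prod_symm _ hint, ← mul_assoc, ← integral_const_mul, ← integral_const_mul,
    ← integral_sub ((hρ.pow 2).integrable.const_mul _) (hρ.integrable.const_mul _)]
  refine integral_mono (((hρ.pow 2).integrable.const_mul _).sub (hρ.integrable.const_mul _))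
    hint.integral_prod_right fun y => ?_
  simp only [integral_const_mul]
  calc kernelMass * ρ y ^ 2 - ε * (L * kernelMoment) * ρ y
      = ρ y * (kernelMass * ρ y - ε * (L * kernelMoment)) := by ring
    _ ≤ ρ y * ∫ x, bilaplacianKernel ε (x - y) * ρ x :=
        mul_le_mul_of_nonneg_left (sub_le_integral_bilaplacianKernel_mul hρ hL hε y) (hρ₀ y)

end ApproximateIdentity

section SpaceTime

variable {u : ℝ → E3 → ℂ}

/-- The partial time derivative `∂ₜu`. -/
def timeDeriv (u : ℝ → E3 → ℂ) (t : ℝ) (x : E3) : ℂ := deriv (fun s => u s x) t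

lemma contDiff_slice (hu : ContDiff ℝ ∞ (Function.uncurry u)) (t : ℝ) : ContDiff ℝ ∞ (u t) :=
  hu.comp (contDiff_const.prodMk contDiff_id)

lemma hasDerivAt_fderiv_uncurry (hu : ContDiff ℝ ∞ (Function.uncurry u)) (t : ℝ) (x : E3) :
    HasDerivAt (fun s => u s x) (fderiv ℝ (Function.uncurry u) (t, x) (1, 0)) t :=
  HasFDerivAt.comp_hasDerivAt (f := fun s => (s, x)) t
    (hu.differentiable (by simp) (t, x)).hasFDerivAt
    ((hasDerivAt_id t).prodMk (hasDerivAt_const t x))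

lemma timeDeriv_eq (hu : ContDiff ℝ ∞ (Function.uncurry u)) (t : ℝ) (x : E3) :
    timeDeriv u t x = fderiv ℝ (Function.uncurry u) (t, x) (1, 0) :=
  (hasDerivAt_fderiv_uncurry hu t x).deriv

lemma pd_eq_fderiv_uncurry (hu : ContDiff ℝ ∞ (Function.uncurry u)) (j : Fin 3) (t : ℝ)
    (x : E3) : pd j (u t) x = fderiv ℝ (Function.uncurry u) (t, x) (0, e3 j) := by
  have hslice := (hu.differentiable (by simp) (t, x)).hasFDerivAt.comp x
    ((hasFDerivAt_const t x).prodMk (hasFDerivAt_id x))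
  exact congr($(hslice.fderiv) (e3 j))

lemma uncurry_timeDeriv (hu : ContDiff ℝ ∞ (Function.uncurry u)) :
    Function.uncurry (timeDeriv u) = fun z => fderiv ℝ (Function.uncurry u) z (1, 0) :=
  funext fun z => timeDeriv_eq hu z.1 z.2

lemma uncurry_pd (hu : ContDiff ℝ ∞ (Function.uncurry u)) (j : Fin 3) :
    Function.uncurry (fun t => pd j (u t)) =
      fun z => fderiv ℝ (Function.uncurry u) z (0, e3 j) :=
  funext fun z => pd_eq_fderiv_uncurry hu j z.1 z.2

lemma contDiff_uncurry_timeDeriv (hu : ContDiff ℝ ∞ (Function.uncurry u)) :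
    ContDiff ℝ ∞ (Function.uncurry (timeDeriv u)) := by
  rw [uncurry_timeDeriv hu]
  exact (hu.fderiv_right (m := ∞) le_rfl).clm_apply contDiff_const

lemma contDiff_uncurry_pd (hu : ContDiff ℝ ∞ (Function.uncurry u)) (j : Fin 3) :
    ContDiff ℝ ∞ (Function.uncurry fun t => pd j (u t)) := by
  rw [uncurry_pd hu]
  exact (hu.fderiv_right (m := ∞) le_rfl).clm_apply contDiff_const

lemma hasDerivAt_timeDeriv (hu : ContDiff ℝ ∞ (Function.uncurry u)) (t : ℝ) (x : E3) :
    HasDerivAt (fun s => u s x) (timeDeriv u t x) t :=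
  timeDeriv_eq hu t x ▸ hasDerivAt_fderiv_uncurry hu t x

lemma timeDeriv_pd (hu : ContDiff ℝ ∞ (Function.uncurry u)) (j : Fin 3) (t : ℝ) (x : E3) :
    timeDeriv (fun s => pd j (u s)) t x = pd j (timeDeriv u t) x := by
  rw [timeDeriv_eq (contDiff_uncurry_pd hu j),
    pd_eq_fderiv_uncurry (contDiff_uncurry_timeDeriv hu), uncurry_pd hu, uncurry_timeDeriv hu]
  exact fderiv_fderiv_comm hu _ _ _

lemma hasDerivAt_momentum (hu : ContDiff ℝ ∞ (Function.uncurry u)) (k : Fin 3) (t : ℝ) (x : E3) :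
    HasDerivAt (fun s => momentum (u s) k x) (momentumDt (u t) (timeDeriv u t) k x) t := by
  have hpd := timeDeriv_pd hu k t x ▸ hasDerivAt_timeDeriv (contDiff_uncurry_pd hu k) t x
  rw [momentumDt, add_comm]
  exact ((hasDerivAt_timeDeriv hu t x).const_mul Complex.I).inner ℝ hpd

lemma hasDerivAt_norm_sq (hu : ContDiff ℝ ∞ (Function.uncurry u)) (t : ℝ) (x : E3) :
    HasDerivAt (fun s => ‖u s x‖ ^ 2) (2 * ⟪u t x, timeDeriv u t x⟫_ℝ) t :=
  (hasDerivAt_timeDeriv hu t x).norm_sq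

end SpaceTime

section DecayBound

variable {B : ℝ} {f u v : E3 → ℂ}

/-- The quantitative form of `IsDecayingState`: the derivatives of `f` of order at most two are
bounded by `B * decay`. -/
def HasDecayBound (B : ℝ) (f : E3 → ℂ) : Prop :=
  ∀ n ≤ 2, ∀ x, ‖iteratedFDeriv ℝ n f x‖ ≤ B * decay x

lemma norm_e3 (j : Fin 3) : ‖e3 j‖ = 1 := by simp [e3]

lemma norm_pd_le (f : E3 → ℂ) (j : Fin 3) (x : E3) : ‖pd j f x‖ ≤ ‖fderiv ℝ f x‖ := by
  simpa [pd, norm_e3] using (fderiv ℝ f x).le_opNorm (e3 j)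

lemma le_mul_decay {r C₀ C₄ : ℝ} (hr : 0 ≤ r) {x : E3} (h₀ : r ≤ C₀) (h₄ : ‖x‖ ^ 4 * r ≤ C₄) :
    r ≤ 8 * (C₀ + C₄) * decay x := by
  rw [decay, rpow_neg (by positivity), ← div_eq_mul_inv, le_div_iff₀ (by positivity)]
  have hpow : (1 + ‖x‖) ^ 4 ≤ 8 * (1 ^ 4 + ‖x‖ ^ 4) :=
    (add_pow_le zero_le_one (norm_nonneg x) 4).trans_eq (by norm_num)
  calc r * (1 + ‖x‖) ^ (4 : ℝ) ≤ r * (8 * (1 ^ 4 + ‖x‖ ^ 4)) := by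
        rw [rpow_ofNat]
        exact mul_le_mul_of_nonneg_left hpow hr
    _ ≤ 8 * (C₀ + C₄) := by linarith

namespace HasDecayBound

lemma norm_le (h : HasDecayBound B f) (x : E3) : ‖f x‖ ≤ B * decay x := by
  simpa using h 0 zero_le_two x

lemma norm_fderiv_le (h : HasDecayBound B f) (x : E3) : ‖fderiv ℝ f x‖ ≤ B * decay x := by
  simpa using h 1 one_le_two x

lemma norm_pd_le (h : HasDecayBound B f) (j : Fin 3) (x : E3) : ‖pd j f x‖ ≤ B * decay x :=
  (_root_.norm_pd_le f j x).trans (h.norm_fderiv_le x)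

lemma norm_pd_pd_le (h : HasDecayBound B f) (hf : ContDiff ℝ ∞ f) (j k : Fin 3) (x : E3) :
    ‖pd j (pd k f) x‖ ≤ B * decay x := by
  refine le_trans ?_ (h 2 le_rfl x)
  have hle := (iteratedFDeriv ℝ 2 f x).le_opNorm ![e3 j, e3 k]
  rw [iteratedFDeriv_two_apply] at hle
  rw [show pd j (pd k f) x = _ from fderiv_fderiv_apply hf _ _ _]
  simpa [Fin.prod_univ_two, norm_e3] using hle

lemma nonneg (h : HasDecayBound B f) : 0 ≤ B := by
  have h₀ := (norm_nonneg _).trans (h.norm_le 0)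
  simpa [decay] using h₀

lemma mul_decay_le (h : HasDecayBound B f) (x : E3) : B * decay x ≤ B :=
  mul_le_of_le_one_right h.nonneg (decay_le_one x)

lemma isDecayingState (h : HasDecayBound B f) (hf : ContDiff ℝ ∞ f) : IsDecayingState f where
  contDiff := hf
  decays := .of_norm_le hf.continuous.aestronglyMeasurable h.norm_le
  decays_pd j := .of_norm_le (contDiff_pd hf j).continuous.aestronglyMeasurable (h.norm_pd_le j)
  decays_pd_pd j k := .of_norm_le
    (contDiff_pd (contDiff_pd hf k) j).continuous.aestronglyMeasurable (h.norm_pd_pd_le hf j k)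

lemma norm_sub_le (h : HasDecayBound B f) (hf : ContDiff ℝ ∞ f) (x y : E3) :
    ‖f x - f y‖ ≤ B * ‖x - y‖ :=
  convex_univ.norm_image_sub_le_of_norm_fderiv_le (𝕜 := ℝ)
    (fun z _ => hf.differentiable (by simp) z)
    (fun z _ => (h.norm_fderiv_le z).trans (h.mul_decay_le z)) (mem_univ y) (mem_univ x)

lemma abs_norm_sq_sub_le (h : HasDecayBound B f) (hf : ContDiff ℝ ∞ f) (x y : E3) :
    |‖f x‖ ^ 2 - ‖f y‖ ^ 2| ≤ 2 * B ^ 2 * ‖x - y‖ := by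
  have hB (z : E3) : ‖f z‖ ≤ B := (h.norm_le z).trans (h.mul_decay_le z)
  have hadd : |‖f x‖ + ‖f y‖| ≤ 2 * B := by
    rw [abs_of_nonneg (by positivity)]
    linarith [hB x, hB y]
  calc |‖f x‖ ^ 2 - ‖f y‖ ^ 2| = |‖f x‖ + ‖f y‖| * |‖f x‖ - ‖f y‖| := by rw [sq_sub_sq, abs_mul]
    _ ≤ 2 * B * (B * ‖x - y‖) := mul_le_mul hadd
        ((abs_norm_sub_norm_le _ _).trans (h.norm_sub_le hf x y)) (abs_nonneg _)
        (by linarith [h.nonneg])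
    _ = 2 * B ^ 2 * ‖x - y‖ := by ring

lemma norm_sq_le (h : HasDecayBound B f) (x : E3) : ‖f x‖ ^ 2 ≤ B ^ 2 * decay x := by
  have hB : ‖f x‖ ≤ B := (h.norm_le x).trans (h.mul_decay_le x)
  calc ‖f x‖ ^ 2 = ‖f x‖ * ‖f x‖ := sq _
    _ ≤ B * (B * decay x) := mul_le_mul hB (h.norm_le x) (norm_nonneg _) h.nonneg
    _ = B ^ 2 * decay x := by ring

end HasDecayBound

lemma abs_inner_le_sq_mul_decay {z w : ℂ} {x : E3} (hB : 0 ≤ B) (hz : ‖z‖ ≤ B * decay x)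
    (hw : ‖w‖ ≤ B * decay x) : |⟪z, w⟫_ℝ| ≤ B ^ 2 * decay x :=
  calc |⟪z, w⟫_ℝ| ≤ ‖z‖ * ‖w‖ := abs_real_inner_le_norm z w
    _ ≤ B * (B * decay x) :=
        mul_le_mul (hz.trans (mul_le_of_le_one_right hB (decay_le_one x))) hw (norm_nonneg w) hB
    _ = B ^ 2 * decay x := by ring

lemma abs_momentum_le (hu : HasDecayBound B u) (k : Fin 3) (x : E3) :
    |momentum u k x| ≤ B ^ 2 * decay x :=
  abs_inner_le_sq_mul_decay hu.nonneg (by simpa using hu.norm_le x) (hu.norm_pd_le k x)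

lemma abs_momentumDt_le (hu : HasDecayBound B u) (hv : HasDecayBound B v) (k : Fin 3) (x : E3) :
    |momentumDt u v k x| ≤ 2 * B ^ 2 * decay x := by
  have h₁ := abs_inner_le_sq_mul_decay hu.nonneg (z := Complex.I * v x)
    (by simpa using hv.norm_le x) (hu.norm_pd_le k x)
  have h₂ := abs_inner_le_sq_mul_decay hu.nonneg (z := Complex.I * u x)
    (by simpa using hu.norm_le x) (hv.norm_pd_le k x)
  unfold momentumDt
  linarith [abs_add_le ⟪Complex.I * v x, pd k u x⟫_ℝ ⟪Complex.I * u x, pd k v x⟫_ℝ]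

variable {a b lam : ℝ}

lemma HasDecayBound.norm_residual_le (hu : HasDecayBound B u) (huC : ContDiff ℝ ∞ u)
    (hv : HasDecayBound B v) (x : E3) : ‖Complex.I * v x + lap u x‖ ≤ 4 * B * decay x := by
  have hlap : ‖lap u x‖ ≤ 3 * (B * decay x) := by
    simpa [lap] using norm_sum_le_of_le Finset.univ fun j _ => hu.norm_pd_pd_le huC j j x
  calc ‖Complex.I * v x + lap u x‖ ≤ ‖v x‖ + ‖lap u x‖ := by
        simpa using norm_add_le (Complex.I * v x) (lap u x)
    _ ≤ 4 * B * decay x := by linarith [hv.norm_le x]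

lemma IsSlice.radialForce_le (h : IsSlice a b lam u v) (ha : 0 < a) (hb : 0 ≤ b)
    (hlam : 0 ≤ lam) (hu : HasDecayBound B u) (hv : HasDecayBound B v) (x : E3) :
    radialForce a b lam u x ≤ (2 + b / 2) * (16 * B ^ 2 / a) * decay x := by
  set R := ‖Complex.I * v x + lap u x‖
  have hR : R ≤ 4 * B * decay x := hu.norm_residual_le h.state.contDiff hv x
  have hR' : R ≤ 4 * B := by linarith [hu.mul_decay_le x]
  have hsum := h.add_norm_le ha hlam x
  have hq : 0 ≤ ‖u x‖ / ‖x‖ ^ 2 := by positivity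
  have hn : 0 ≤ lam * ‖x‖ ^ (-b) * ‖u x‖ ^ 3 := by positivity
  have hqR : ‖u x‖ / ‖x‖ ^ 2 ≤ R / a := by
    rw [le_div_iff₀' ha]
    linarith
  calc radialForce a b lam u x
      = (2 * (a * (‖u x‖ / ‖x‖ ^ 2)) + b / 2 * (lam * ‖x‖ ^ (-b) * ‖u x‖ ^ 3))
        * (‖u x‖ / ‖x‖ ^ 2) := by rw [radialForce_eq]; ring
    _ ≤ (2 * R + b / 2 * R) * (R / a) := by
        gcongr <;> nlinarith
    _ = (2 + b / 2) * (R * R / a) := by ring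
    _ ≤ (2 + b / 2) * (4 * B * (4 * B * decay x) / a) := by
        have hB := hu.nonneg
        gcongr
    _ = (2 + b / 2) * (16 * B ^ 2 / a) * decay x := by ring

lemma IsSlice.integral_radialForce_le (h : IsSlice a b lam u v) (ha : 0 < a) (hb : 0 ≤ b)
    (hlam : 0 ≤ lam) (hu : HasDecayBound B u) (hv : HasDecayBound B v) :
    ∫ x, radialForce a b lam u x ≤ (2 + b / 2) * (16 * B ^ 2 / a) * ∫ x, decay x := by
  rw [← integral_const_mul]
  exact integral_mono (h.decays_radialForce ha hlam).integrable (integrable_decay.const_mul _)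
    (h.radialForce_le ha hb hlam hu hv)

end DecayBound

section Solution

variable {a b lam : ℝ} {u : ℝ → E3 → ℂ}

namespace IsSchwartzSolution

lemma exists_hasDecayBound (hu : IsSchwartzSolution a b lam u) {T : ℝ} (hT : 0 < T) :
    ∃ B, ∀ t ∈ Icc (-T) T, HasDecayBound B (u t) ∧ HasDecayBound B (timeDeriv u t) := by
  choose C hC using fun k n => hu.unif_bound k n T hT
  have hbound {g : E3 → ℂ} (hg : ∀ k n x,
      ‖x‖ ^ k * ‖iteratedFDeriv ℝ n g x‖ ≤ C k n) :
      HasDecayBound (∑ n ∈ Finset.range 3, 8 * (C 0 n + C 4 n)) g := fun n hn x => by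
    have hpos (k m : ℕ) : 0 ≤ C k m := le_trans (by positivity) (hg k m 0)
    refine (le_mul_decay (norm_nonneg _) (by simpa using hg 0 n x) (hg 4 n x)).trans ?_
    gcongr
    · exact decay_nonneg x
    · exact Finset.single_le_sum (f := fun n => 8 * (C 0 n + C 4 n))
        (fun m _ => mul_nonneg (by norm_num) (add_nonneg (hpos 0 m) (hpos 4 m)))
        (Finset.mem_range_succ_iff.2 hn)
  refine ⟨_, fun t ht => ⟨hbound fun k n x => ?_, hbound fun k n x => ?_⟩⟩
  · exact (le_add_of_nonneg_right (by positivity)).trans (hC k n t ht x)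
  · exact (le_add_of_nonneg_left (by positivity)).trans (hC k n t ht x)

lemma isSlice (hu : IsSchwartzSolution a b lam u) (t : ℝ) :
    IsSlice a b lam (u t) (timeDeriv u t) := by
  obtain ⟨B, hB⟩ := hu.exists_hasDecayBound (T := |t| + 1) (by positivity)
  obtain ⟨hBu, hBv⟩ := hB t ⟨by linarith [neg_abs_le t], by linarith [le_abs_self t]⟩
  have hv := hBv.isDecayingState (contDiff_slice (contDiff_uncurry_timeDeriv hu.smooth) t)
  refine ⟨hBu.isDecayingState (contDiff_slice hu.smooth t), hv.contDiff, hv.decays, hv.decays_pd,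
    fun x hx => ?_⟩
  have heq := sub_eq_iff_eq_add.1 (hu.eqn t x hx)
  rw [timeDeriv, heq, effectivePotential]
  push_cast
  ring

end IsSchwartzSolution

end Solution

section ActionBounds

variable {a b lam ε : ℝ} {u v : E3 → ℂ}

/-- The density `|u|² + |∇u|²` of the squared `H¹` norm. -/
def sobolevDensity (u : E3 → ℂ) (x : E3) : ℝ := ‖u x‖ ^ 2 + ∑ j, ‖pd j u x‖ ^ 2

lemma sobolevDensity_nonneg (u : E3 → ℂ) (x : E3) : 0 ≤ sobolevDensity u x := by
  unfold sobolevDensity; positivity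

lemma IsDecayingState.decays_sobolevDensity (hu : IsDecayingState u) :
    Decays (sobolevDensity u) :=
  hu.decays_norm_sq.add (.sum fun j => (hu.decays_pd j).norm.pow 2)

lemma integral_norm_sq_le_integral_sobolevDensity (hu : IsDecayingState u) :
    ∫ x, ‖u x‖ ^ 2 ≤ ∫ x, sobolevDensity u x :=
  integral_mono hu.decays_norm_sq.integrable hu.decays_sobolevDensity.integrable
    fun _ => le_add_of_nonneg_right (by positivity)

lemma abs_sum_pdR_softNorm_mul_momentum_le (hε : 0 < ε) (u : E3 → ℂ) (y x : E3) :
    |∑ k, pdR k (softNorm ε) y * momentum u k x| ≤ 2⁻¹ * sobolevDensity u x := by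
  have hmomentum (k : Fin 3) : momentum u k x ^ 2 ≤ ‖u x‖ ^ 2 * ‖pd k u x‖ ^ 2 := by
    have hcs := abs_real_inner_le_norm (Complex.I * u x) (pd k u x)
    rw [norm_mul, Complex.norm_I, one_mul] at hcs
    rw [← mul_pow]
    exact sq_le_sq' (neg_le_of_abs_le hcs) (le_of_abs_le hcs)
  refine (abs_sum_pdR_softNorm_mul_le hε y _).trans (sqrt_le_iff.2 ⟨?_, ?_⟩)
  · exact mul_nonneg (by norm_num) (sobolevDensity_nonneg u x)
  · calc ∑ k, momentum u k x ^ 2 ≤ ‖u x‖ ^ 2 * ∑ k, ‖pd k u x‖ ^ 2 := by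
          rw [Finset.mul_sum]
          exact Finset.sum_le_sum fun k _ => hmomentum k
      _ ≤ (2⁻¹ * sobolevDensity u x) ^ 2 := by
          unfold sobolevDensity
          linarith [four_mul_le_sq_add (‖u x‖ ^ 2) (∑ k, ‖pd k u x‖ ^ 2)]

lemma abs_morawetzAction_le (hε : 0 < ε) (hu : IsDecayingState u) :
    |morawetzAction ε u| ≤ 2⁻¹ * ∫ x, sobolevDensity u x := by
  rw [← integral_const_mul]
  exact norm_integral_le_of_norm_le (f := fun x => ∑ k, pdR k (softNorm ε) x * momentum u k x)
    (hu.decays_sobolevDensity.integrable.const_mul _)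
    (.of_forall fun x => abs_sum_pdR_softNorm_mul_momentum_le hε u x x)

lemma abs_interactionAction_le (hε : 0 < ε) (hu : IsDecayingState u) :
    |interactionAction ε u| ≤ 2⁻¹ * (∫ x, sobolevDensity u x) ^ 2 := by
  have hint := (hu.decays_sobolevDensity.integrable.const_mul 2⁻¹).mul_prod
    hu.decays_norm_sq.integrable
  calc |interactionAction ε u|
      ≤ ∫ z : E3 × E3, 2⁻¹ * sobolevDensity u z.1 * ‖u z.2‖ ^ 2 := by
        refine norm_integral_le_of_norm_le (f := fun z : E3 × E3 => ‖u z.2‖ ^ 2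
          * ∑ k, pdR k (softNorm ε) (z.1 - z.2) * momentum u k z.1) hint (.of_forall fun z => ?_)
        rw [norm_mul, norm_of_nonneg (sq_nonneg ‖u z.2‖), mul_comm]
        gcongr
        exact abs_sum_pdR_softNorm_mul_momentum_le hε u _ _
    _ = 2⁻¹ * (∫ x, sobolevDensity u x) * ∫ x, ‖u x‖ ^ 2 := by
        rw [← integral_const_mul 2⁻¹]
        exact integral_prod_mul (fun x => 2⁻¹ * sobolevDensity u x) fun x => ‖u x‖ ^ 2
    _ ≤ 2⁻¹ * (∫ x, sobolevDensity u x) * ∫ x, sobolevDensity u x := by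
        have hnonneg : 0 ≤ ∫ x, sobolevDensity u x := integral_nonneg (sobolevDensity_nonneg u)
        exact mul_le_mul_of_nonneg_left (integral_norm_sq_le_integral_sobolevDensity hu)
          (by positivity)
    _ = 2⁻¹ * (∫ x, sobolevDensity u x) ^ 2 := by ring

lemma kernelMoment_nonneg : 0 ≤ kernelMoment :=
  integral_nonneg fun x => mul_nonneg (bilaplacianKernel_nonneg 1 x) (norm_nonneg x)

lemma IsSlice.sub_le_actionDt (h : IsSlice a b lam u v) (ha : 0 < a) (hb : 0 ≤ b)
    (hlam : 0 ≤ lam) (hε : 0 < ε) {m L K : ℝ} (hm : ∫ x, ‖u x‖ ^ 2 ≤ m) (hL₀ : 0 ≤ L)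
    (hL : ∀ x y, |‖u x‖ ^ 2 - ‖u y‖ ^ 2| ≤ L * ‖x - y‖)
    (hK : ∫ x, radialForce a b lam u x ≤ K) :
    15 / 2 * kernelMass * (∫ x, ‖u x‖ ^ 4) - ε * (m * (15 / 2 * (L * kernelMoment) + K))
      ≤ interactionActionDt ε u v + m * morawetzActionDt ε u v := by
  have hm₀ : 0 ≤ m := (integral_nonneg fun x => sq_nonneg _).trans hm
  have hmorawetz := mul_le_mul_of_nonneg_left (h.sub_le_morawetzActionDt ha hb hlam hε) hm₀
  have hinteraction := h.sub_le_interactionActionDt ha hb hlam hε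
  have hkernel := sub_le_integral_interaction_bilaplacianKernel h.state.decays_norm_sq
    (fun x => sq_nonneg _) hL hε
  have hforce : (∫ x, ‖u x‖ ^ 2) * ∫ x, ‖x‖ * radialForce a b lam u x
      ≤ m * ∫ x, ‖x‖ * radialForce a b lam u x := by
    gcongr
    exact integral_nonneg fun x => mul_nonneg (norm_nonneg x) (radialForce_nonneg ha.le hb hlam u x)
  have herror : ε * (L * kernelMoment * ∫ x, ‖u x‖ ^ 2) ≤ ε * (L * kernelMoment * m) := by
    have := kernelMoment_nonneg
    gcongr
  have hforce_error : ε * (m * ∫ x, radialForce a b lam u x) ≤ ε * (m * K) := by gcongr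
  simp only [← pow_mul] at hkernel
  linarith

end ActionBounds

section ActionDerivatives

variable {a b lam ε : ℝ}

lemma abs_sum_pdR_softNorm_mul_le_of_abs_le (hε : 0 < ε) (x : E3) {z : Fin 3 → ℝ} {c : ℝ}
    (hz : ∀ k, |z k| ≤ c) : |∑ k, pdR k (softNorm ε) x * z k| ≤ 2 * c := by
  have hc : 0 ≤ c := (abs_nonneg _).trans (hz 0)
  have hz' (k : Fin 3) : z k ^ 2 ≤ c ^ 2 :=
    sq_le_sq' (neg_le_of_abs_le (hz k)) (le_of_abs_le (hz k))
  refine (abs_sum_pdR_softNorm_mul_le hε x z).trans (sqrt_le_iff.2 ⟨by positivity, ?_⟩)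
  rw [Fin.sum_univ_three]
  linarith [hz' 0, hz' 1, hz' 2, sq_nonneg c]

lemma abs_interactionDensityDt_le {B : ℝ} {u v : E3 → ℂ} (hε : 0 < ε) (hu : HasDecayBound B u)
    (hv : HasDecayBound B v) (z : E3 × E3) :
    |2 * ⟪u z.2, v z.2⟫_ℝ * ∑ k, pdR k (softNorm ε) (z.1 - z.2) * momentum u k z.1
      + ‖u z.2‖ ^ 2 * ∑ k, pdR k (softNorm ε) (z.1 - z.2) * momentumDt u v k z.1|
      ≤ 8 * B ^ 4 * (decay z.1 * decay z.2) := by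
  have hmomentum := abs_sum_pdR_softNorm_mul_le_of_abs_le hε (z.1 - z.2)
    fun k => abs_momentum_le hu k z.1
  have hmomentumDt := abs_sum_pdR_softNorm_mul_le_of_abs_le hε (z.1 - z.2)
    fun k => abs_momentumDt_le hu hv k z.1
  have hmass := abs_inner_le_sq_mul_decay hu.nonneg (hu.norm_le z.2) (hv.norm_le z.2)
  have := decay_nonneg z.2
  refine (abs_add_le _ _).trans ?_
  rw [abs_mul, abs_mul, abs_mul, abs_two, abs_of_nonneg (sq_nonneg ‖u z.2‖)]
  calc _ ≤ 2 * (B ^ 2 * decay z.2) * (2 * (B ^ 2 * decay z.1))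
        + B ^ 2 * decay z.2 * (2 * (2 * B ^ 2 * decay z.1)) := by
        gcongr
        exact hu.norm_sq_le z.2
    _ = 8 * B ^ 4 * (decay z.1 * decay z.2) := by ring

lemma IsSlice.integrable_interactionDensityDt {u v : E3 → ℂ} (h : IsSlice a b lam u v)
    (hε : 0 < ε) : Integrable fun z : E3 × E3 =>
      2 * ⟪u z.2, v z.2⟫_ℝ * ∑ k, pdR k (softNorm ε) (z.1 - z.2) * momentum u k z.1
        + ‖u z.2‖ ^ 2 * ∑ k, pdR k (softNorm ε) (z.1 - z.2) * momentumDt u v k z.1 := by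
  have hw := (isVirialWeight_softNorm hε).grad
  have hmass := integrable_interaction_sum
    (h.state.decays.inner_isMultiplier h.decays_dt.isMultiplier) h.state.decays_momentum hw
  simp only [mul_assoc]
  exact (hmass.const_mul 2).add
    (integrable_interaction_sum h.state.decays_norm_sq h.decays_momentumDt hw)

variable {u : ℝ → E3 → ℂ}

namespace IsSchwartzSolution

lemma exists_hasDecayBound_nhds (hu : IsSchwartzSolution a b lam u) (t : ℝ) :
    ∃ B, ∀ᶠ s in 𝓝 t, HasDecayBound B (u s) ∧ HasDecayBound B (timeDeriv u s) := by
  obtain ⟨B, hB⟩ := hu.exists_hasDecayBound (T := |t| + 1) (by positivity)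
  exact ⟨B, Filter.mem_of_superset
    (Icc_mem_nhds (by linarith [neg_abs_le t]) (by linarith [le_abs_self t])) hB⟩

lemma hasDerivAt_morawetzAction (hu : IsSchwartzSolution a b lam u) (hε : 0 < ε) (t : ℝ) :
    HasDerivAt (fun s => morawetzAction ε (u s)) (morawetzActionDt ε (u t) (timeDeriv u t)) t := by
  obtain ⟨B, hB⟩ := hu.exists_hasDecayBound_nhds t
  have hw := (isVirialWeight_softNorm hε).grad
  have hdecays (s : ℝ) : Decays fun x => ∑ k, pdR k (softNorm ε) x * momentum (u s) k x :=
    .sum fun k => (hw k).mul_decays ((hu.isSlice s).state.decays_momentum k)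
  have hdecays_dt : Decays fun x => ∑ k, pdR k (softNorm ε) x
      * momentumDt (u t) (timeDeriv u t) k x :=
    .sum fun k => (hw k).mul_decays ((hu.isSlice t).decays_momentumDt k)
  refine (hasDerivAt_integral_of_dominated_loc_of_deriv_le hB
    (.of_forall fun s => (hdecays s).1) (hdecays t).integrable hdecays_dt.1
    (.of_forall fun x s hs => ?_) (integrable_decay.const_mul (4 * B ^ 2))
    (.of_forall fun x s _ => .fun_sum fun k _ =>
      (hasDerivAt_momentum hu.smooth k s x).const_mul _)).2
  exact (abs_sum_pdR_softNorm_mul_le_of_abs_le hε x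
    fun k => abs_momentumDt_le hs.1 hs.2 k x).trans_eq (by ring)

lemma hasDerivAt_interactionAction (hu : IsSchwartzSolution a b lam u) (hε : 0 < ε) (t : ℝ) :
    HasDerivAt (fun s => interactionAction ε (u s))
      (interactionActionDt ε (u t) (timeDeriv u t)) t := by
  obtain ⟨B, hB⟩ := hu.exists_hasDecayBound_nhds t
  have hw := (isVirialWeight_softNorm hε).grad
  have hint (s : ℝ) : Integrable fun z : E3 × E3 =>
      ‖u s z.2‖ ^ 2 * ∑ k, pdR k (softNorm ε) (z.1 - z.2) * momentum (u s) k z.1 :=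
    integrable_interaction_sum (hu.isSlice s).state.decays_norm_sq
      (hu.isSlice s).state.decays_momentum hw
  refine (hasDerivAt_integral_of_dominated_loc_of_deriv_le hB
    (.of_forall fun s => (hint s).1) (hint t) ((hu.isSlice t).integrable_interactionDensityDt hε).1
    (.of_forall fun z s hs => abs_interactionDensityDt_le hε hs.1 hs.2 z)
    ((integrable_decay.mul_prod integrable_decay).const_mul (8 * B ^ 4))
    (.of_forall fun z s _ => (hasDerivAt_norm_sq hu.smooth s z.2).mul <| .fun_sum fun k _ =>
      (hasDerivAt_momentum hu.smooth k s z.1).const_mul _)).2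

end IsSchwartzSolution

end ActionDerivatives

section SpacetimeBound

variable {a b lam m T : ℝ} {u : ℝ → E3 → ℂ}

namespace IsSchwartzSolution

lemma continuous_integral_norm_pow_four (hu : IsSchwartzSolution a b lam u) :
    Continuous fun t => ∫ x, ‖u t x‖ ^ 4 := by
  refine continuous_iff_continuousAt.2 fun t => ?_
  obtain ⟨B, hB⟩ := hu.exists_hasDecayBound_nhds t
  refine continuousAt_of_dominated
    (.of_forall fun s => ((contDiff_slice hu.smooth s).continuous.norm.pow 4).aestronglyMeasurable)
    (hB.mono fun s hs => .of_forall fun x => ?_) (integrable_decay.const_mul (B ^ 4))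
    (.of_forall fun x => by have := hu.smooth.continuous; fun_prop)
  calc ‖‖u s x‖ ^ 4‖ = (‖u s x‖ ^ 2) ^ 2 := by rw [norm_pow, norm_norm, ← pow_mul]
    _ ≤ (B ^ 2 * decay x) ^ 2 := by gcongr; exact hs.1.norm_sq_le x
    _ = B ^ 4 * (decay x * decay x) := by ring
    _ ≤ B ^ 4 * decay x := by
        gcongr
        exact mul_le_of_le_one_left (decay_nonneg x) (decay_le_one x)

lemma exists_sub_le_actionDt (hu : IsSchwartzSolution a b lam u) (ha : 0 < a) (hb : 0 ≤ b)
    (hlam : 0 ≤ lam) (hm : ∀ t, ∫ x, ‖u t x‖ ^ 2 ≤ m) (hT : 0 < T) :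
    ∃ D, ∀ ε > 0, ∀ t ∈ Icc (-T) T, 15 / 2 * kernelMass * (∫ x, ‖u t x‖ ^ 4) - ε * D
      ≤ interactionActionDt ε (u t) (timeDeriv u t)
        + m * morawetzActionDt ε (u t) (timeDeriv u t) := by
  obtain ⟨B, hB⟩ := hu.exists_hasDecayBound hT
  exact ⟨_, fun ε hε t ht => (hu.isSlice t).sub_le_actionDt ha hb hlam hε (hm t)
    (mul_nonneg zero_le_two (sq_nonneg B))
    ((hB t ht).1.abs_norm_sq_sub_le (contDiff_slice hu.smooth t))
    ((hu.isSlice t).integral_radialForce_le ha hb hlam (hB t ht).1 (hB t ht).2)⟩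

lemma abs_action_le {ε : ℝ} (hu : IsSchwartzSolution a b lam u) (hε : 0 < ε)
    (hm : ∀ t, ∫ x, sobolevDensity (u t) x ≤ m) (t : ℝ) :
    |interactionAction ε (u t) + m * morawetzAction ε (u t)| ≤ m ^ 2 := by
  have hnonneg : 0 ≤ ∫ x, sobolevDensity (u t) x := integral_nonneg (sobolevDensity_nonneg _)
  have hm₀ : 0 ≤ m := hnonneg.trans (hm t)
  calc |interactionAction ε (u t) + m * morawetzAction ε (u t)|
      ≤ |interactionAction ε (u t)| + m * |morawetzAction ε (u t)| := by
        rw [← abs_of_nonneg hm₀, ← abs_mul, abs_of_nonneg hm₀]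
        exact abs_add_le _ _
    _ ≤ 2⁻¹ * (∫ x, sobolevDensity (u t) x) ^ 2
        + m * (2⁻¹ * ∫ x, sobolevDensity (u t) x) := by
        gcongr
        · exact abs_interactionAction_le hε (hu.isSlice t).state
        · exact abs_morawetzAction_le hε (hu.isSlice t).state
    _ ≤ 2⁻¹ * m ^ 2 + m * (2⁻¹ * m) := by
        have := hm t
        gcongr
    _ = m ^ 2 := by ring

lemma intervalIntegral_sub_le {ε D : ℝ} (hu : IsSchwartzSolution a b lam u) (hε : 0 < ε)
    (hm : ∀ t, ∫ x, sobolevDensity (u t) x ≤ m) (hT : 0 < T)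
    (hD : ∀ t ∈ Icc (-T) T, 15 / 2 * kernelMass * (∫ x, ‖u t x‖ ^ 4) - D
      ≤ interactionActionDt ε (u t) (timeDeriv u t)
        + m * morawetzActionDt ε (u t) (timeDeriv u t)) :
    15 / 2 * kernelMass * (∫ t in -T..T, ∫ x, ‖u t x‖ ^ 4) - D * (2 * T) ≤ 2 * m ^ 2 := by
  have hderiv (t : ℝ) := (hu.hasDerivAt_interactionAction hε t).fun_add
    ((hu.hasDerivAt_morawetzAction hε t).const_mul m)
  have hquartic := hu.continuous_integral_norm_pow_four.const_mul (15 / 2 * kernelMass)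
  have hftc := intervalIntegral.integral_le_sub_of_hasDeriv_right_of_le (neg_le_self hT.le)
    (fun t _ => (hderiv t).continuousAt.continuousWithinAt)
    (fun t _ => (hderiv t).hasDerivWithinAt)
    ((hquartic.fun_sub continuous_const).integrableOn_Icc) fun t ht => hD t (Ioo_subset_Icc_self ht)
  rw [intervalIntegral.integral_sub (hquartic.intervalIntegrable _ _)
      (continuous_const.intervalIntegrable _ _), intervalIntegral.integral_const_mul,
    intervalIntegral.integral_const, smul_eq_mul] at hftc
  have htop := le_of_abs_le (hu.abs_action_le hε hm T)
  have hbot := neg_le_of_abs_le (hu.abs_action_le hε hm (-T))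
  linarith

lemma integral_norm_sq_le (hu : IsSchwartzSolution a b lam u)
    (hm : ∀ t, ∫ x, sobolevDensity (u t) x ≤ m) (t : ℝ) : ∫ x, ‖u t x‖ ^ 2 ≤ m :=
  (integral_norm_sq_le_integral_sobolevDensity (hu.isSlice t).state).trans (hm t)

lemma intervalIntegral_norm_pow_four_le (hu : IsSchwartzSolution a b lam u) (ha : 0 < a)
    (hb : 0 ≤ b) (hlam : 0 ≤ lam) (hm : ∀ t, ∫ x, sobolevDensity (u t) x ≤ m) (hT : 0 < T) :
    ∫ t in -T..T, ∫ x, ‖u t x‖ ^ 4 ≤ 4 / (15 * kernelMass) * m ^ 2 := by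
  obtain ⟨D, hD⟩ := hu.exists_sub_le_actionDt ha hb hlam (hu.integral_norm_sq_le hm) hT
  have hlim : Tendsto (fun ε =>
      15 / 2 * kernelMass * (∫ t in -T..T, ∫ x, ‖u t x‖ ^ 4) - ε * D * (2 * T)) (𝓝[>] 0)
      (𝓝 (15 / 2 * kernelMass * (∫ t in -T..T, ∫ x, ‖u t x‖ ^ 4) - 0 * D * (2 * T))) :=
    tendsto_nhdsWithin_of_tendsto_nhds (Continuous.tendsto (by fun_prop) 0)
  have hle := le_of_tendsto hlim (eventually_nhdsWithin_of_forall fun ε hε =>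
    hu.intervalIntegral_sub_le hε hm hT (hD ε hε))
  have hmass := kernelMass_pos
  rw [div_mul_eq_mul_div, le_div_iff₀ (by positivity)]
  linarith

lemma integrable_integral_norm_pow_four (hu : IsSchwartzSolution a b lam u) (ha : 0 < a)
    (hb : 0 ≤ b) (hlam : 0 ≤ lam) (hm : ∀ t, ∫ x, sobolevDensity (u t) x ≤ m) :
    Integrable fun t => ∫ x, ‖u t x‖ ^ 4 := by
  refine integrable_of_intervalIntegral_norm_bounded (4 / (15 * kernelMass) * m ^ 2)
    (fun T => hu.continuous_integral_norm_pow_four.integrableOn_Icc.mono_set Ioc_subset_Icc_self)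
    tendsto_neg_atTop_atBot tendsto_id ((eventually_gt_atTop 0).mono fun T hT => ?_)
  simp only [norm_of_nonneg (integral_nonneg fun x => pow_nonneg (norm_nonneg (u _ x)) 4)]
  exact hu.intervalIntegral_norm_pow_four_le ha hb hlam hm hT

lemma integral_norm_pow_four_le (hu : IsSchwartzSolution a b lam u) (ha : 0 < a) (hb : 0 ≤ b)
    (hlam : 0 ≤ lam) (hm : ∀ t, ∫ x, sobolevDensity (u t) x ≤ m) :
    ∫ t, ∫ x, ‖u t x‖ ^ 4 ≤ 4 / (15 * kernelMass) * m ^ 2 :=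
  le_of_tendsto (intervalIntegral_tendsto_integral
      (hu.integrable_integral_norm_pow_four ha hb hlam hm) tendsto_neg_atTop_atBot tendsto_id)
    ((eventually_gt_atTop 0).mono fun _ hT =>
      hu.intervalIntegral_norm_pow_four_le ha hb hlam hm hT)

end IsSchwartzSolution

end SpacetimeBound

theorem interaction_morawetz_estimate_general :
    ∃ C : ℝ, 0 < C ∧ ∀ a b lam : ℝ, 0 < a → 0 ≤ b → 0 ≤ lam →
      ∀ u : ℝ → E3 → ℂ, IsSchwartzSolution a b lam u → ∀ E : ℝ,
      (∀ t : ℝ, ∫ x : E3, (‖u t x‖ ^ 2 + ∑ j : Fin 3, ‖pd j (u t) x‖ ^ 2) ≤ E ^ 2) →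
      Integrable (fun t : ℝ => ∫ x : E3, ‖u t x‖ ^ 4) ∧
        ∫ t : ℝ, ∫ x : E3, ‖u t x‖ ^ 4 ≤ C * E ^ 4 := by
  refine ⟨4 / (15 * kernelMass), div_pos four_pos (mul_pos (by norm_num) kernelMass_pos),
    fun a b lam ha hb hlam u hu E hE => ⟨hu.integrable_integral_norm_pow_four ha hb hlam hE, ?_⟩⟩
  calc ∫ t, ∫ x, ‖u t x‖ ^ 4 ≤ 4 / (15 * kernelMass) * (E ^ 2) ^ 2 :=
        hu.integral_norm_pow_four_le ha hb hlam hE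
    _ = 4 / (15 * kernelMass) * E ^ 4 := by rw [← pow_mul]

/-- **Interaction Morawetz estimate (defocusing case, `a > 0`).** There is a
constant `C = C(a,b) > 0` such that for every smooth Schwartz solution of
(INLS) with `‖u(t)‖_{H¹} ≤ E` for all `t`,
`∫_ℝ ∫_{ℝ³} |u(t,x)|⁴ dx dt ≤ C E⁴`. -/
theorem interaction_morawetz_estimate (a b : ℝ) (ha : 0 < a)
    (hb0 : 0 < b) (hb1 : b < 1) :
    ∃ C : ℝ, 0 < C ∧ ∀ u : ℝ → E3 → ℂ, IsSchwartzSolution a b 1 u →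
      ∀ E : ℝ, 0 ≤ E →
      (∀ t : ℝ, ∫ x : E3,
          (‖u t x‖ ^ 2 + ∑ j : Fin 3, ‖pd j (u t) x‖ ^ 2) ≤ E ^ 2) →
      ∫ t : ℝ, ∫ x : E3, ‖u t x‖ ^ 4 ≤ C * E ^ 4 := by
  obtain ⟨C, hC, hbound⟩ := interaction_morawetz_estimate_general
  exact ⟨C, hC, fun u hu E _ hE => (hbound a b 1 ha hb0.le zero_le_one u hu E hE).2⟩
end
end
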